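/- arXiv:1707.03246 — 2 statements merged into one kernel-verified Lean document; each statement's English description precedes it below -/
import Mathlib

section
/- For every convex body K ⊂ R^n with barycenter at the origin, there exists a simplex S ⊆ K with barycenter at the origin such that (vol(S)/vol(K))^{1/n} ≥ c/√n, where c > 0 is an absolute constant. -/
open MeasureTheory

noncomputable def barycenter {n : ℕ} (K : Set (EuclideanSpace ℝ (Fin n))) :
    EuclideanSpace ℝ (Fin n) :=
  (volume K).toReal⁻¹ • ∫ x in K, x

def IsSimplex {n : ℕ} (S : Set (EuclideanSpace ℝ (Fin n))) : Prop :=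
  ∃ v : Fin (n + 1) → EuclideanSpace ℝ (Fin n),
    AffineIndependent ℝ v ∧ S = convexHull ℝ (Set.range v)

/-!
Let `L = K ∩ (-K)`. Three facts combine.

* Milman and Pajor: `vol K ≤ 2 ^ n * vol L` when the barycenter of `K` is the origin
  (`milman_pajor`). The overlap function `F z = vol (K ∩ (z - K))` is log-concave by the
  Brunn-Minkowski inequality, which is derived here from the Prékopa-Leindler inequality. If `X`, `Y`
  are independent and uniform on `K`, then `X + Y` has density `F / vol(K) ^ 2`, mean `0`, and
  lives on `2K`. Jensen's inequality for `log F` gives `log F 0 ≥ E log F (X + Y)`, and the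
  entropy bound coming from the support gives `E log F (X + Y) ≥ log (vol K / 2 ^ n)`. As
  `F 0 = vol L`, this is the claim.

* A large determinant with columns in `L`. For `n` independent points uniform on `L` with second
  moment matrix `M`, one has `E det(x) ^ 2 = n! * det M`, so some choice of points satisfies
  `det(x) ^ 2 ≥ n! * det M` (`exists_det_sq_ge`). Comparison of the uniform law on `L` with the
  Gaussian density of covariance `M` yields `vol(L) ^ 2 ≤ (2 π e) ^ n * det M`
  (`volume_sq_le_det`).

* From a linearly independent family `x_1, …, x_n` in the symmetric body `L`, the points
  `v_i = (x_{i+1} - x_i) / 2` for `0 ≤ i ≤ n`, with `x_0 = x_{n+1} = 0`, belong to `K` and sum to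
  `0`; they span a simplex of volume at least `|det x| / (2 ^ n * n!)`. It is invariant under the
  linear map permuting the `v_i` cyclically, and the origin is the only fixed point of that map,
  hence the barycenter (`exists_centered_simplex`).

Together, `vol(K) ^ 2 ≤ (32 π e) ^ n * n! * vol(S) ^ 2`, and `n! ≤ n ^ n` gives the theorem with
`c = 1 / √(32 π e)`.
-/

section CenteredSimplex

open MeasureTheory ENNReal
open scoped Pointwise

/-! ### The Prékopa-Leindler and Brunn-Minkowski inequalities -/

/-- The one-dimensional Brunn-Minkowski inequality for compact sets: with `p = max A` and
`q = min B`, the sets `a A + b q` and `a p + b B` lie in `C` and meet in at most one point. -/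
lemma bm_real_compact {A B C : Set ℝ} (hA : IsCompact A) (hB : IsCompact B)
    (hA' : A.Nonempty) (hB' : B.Nonempty) {a b : ℝ} (ha : 0 < a) (hb : 0 < b)
    (h : ∀ x ∈ A, ∀ y ∈ B, a * x + b * y ∈ C) :
    ENNReal.ofReal a * volume A + ENNReal.ofReal b * volume B ≤ volume C := by
  obtain ⟨p, hpA, hp⟩ := hA.exists_isGreatest hA'
  obtain ⟨q, hqB, hq⟩ := hB.exists_isLeast hB'
  have key : ∀ (c d : ℝ) (S : Set ℝ), 0 < c → volume ((fun x => c * x + d) '' S)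
      = ENNReal.ofReal c * volume S := by
    intro c d S hc
    have : (fun x => c * x + d) '' S = (fun x => x + d) '' (c • S) := by
      ext y; simp [Set.mem_smul_set, ← eq_sub_iff_add_eq, sub_eq_add_neg]
    rw [this, Set.image_add_right, measure_preimage_add_right, Measure.addHaar_smul]
    simp [abs_of_pos hc]
  rw [← key a (b * q) A ha, ← key b (a * p) B hb]
  have hd : AEDisjoint volume ((fun x => a * x + b * q) '' A) ((fun x => b * x + a * p) '' B) := by
    refine measure_mono_null (t := {a * p + b * q}) ?_ (by simp)
    rintro z ⟨⟨x, hx, rfl⟩, y, hy, hxy⟩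
    have h1 := hp hx
    have h2 := hq hy
    simp only [Set.mem_singleton_iff]
    simp only at hxy
    nlinarith [mul_le_mul_of_nonneg_left h1 ha.le, mul_le_mul_of_nonneg_left h2 hb.le]
  rw [← measure_union₀ _ hd]
  · apply measure_mono
    rintro z (⟨x, hx, rfl⟩ | ⟨x, hx, rfl⟩)
    · exact h x hx q hqB
    · simpa [add_comm] using h p hpA x hx
  · exact (hB.image (by fun_prop)).measurableSet.nullMeasurableSet

/-- The one-dimensional Brunn-Minkowski inequality, extended from compact to measurable sets by
inner regularity. -/
lemma bm_real {A B C : Set ℝ} (hA : MeasurableSet A) (hB : MeasurableSet B)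
    (hA' : A.Nonempty) (hB' : B.Nonempty) {a b : ℝ} (ha : 0 < a) (hb : 0 < b)
    (h : ∀ x ∈ A, ∀ y ∈ B, a * x + b * y ∈ C) :
    ENNReal.ofReal a * volume A + ENNReal.ofReal b * volume B ≤ volume C := by
  obtain ⟨p, hp⟩ := hA'
  obtain ⟨q, hq⟩ := hB'
  rw [hA.measure_eq_iSup_isCompact, hB.measure_eq_iSup_isCompact]
  simp only [ENNReal.mul_iSup, iSup_and']
  refine ENNReal.biSup_add_biSup_le' (p := fun K => K ⊆ A ∧ IsCompact K)
    (q := fun K => K ⊆ B ∧ IsCompact K) ⟨∅, by simp⟩ ⟨∅, by simp⟩ ?_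
  intro K hK L hL
  refine le_trans ?_ (bm_real_compact (hK.2.insert p) (hL.2.insert q) (by simp) (by simp) ha hb
    (C := C) ?_)
  · gcongr <;> simp
  · rintro x (rfl | hx) y (rfl | hy)
    · exact h _ hp _ hq
    · exact h _ hp _ (hL.1 hy)
    · exact h _ (hK.1 hx) _ hq
    · exact h _ (hK.1 hx) _ (hL.1 hy)

/-- The weighted arithmetic-geometric mean inequality in `[0, ∞]`. -/
lemma ennreal_young {a b : ℝ} (ha : 0 < a) (hb : 0 < b) (hab : a + b = 1) (x y : ℝ≥0∞) :
    x ^ a * y ^ b ≤ ENNReal.ofReal a * x + ENNReal.ofReal b * y := by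
  by_cases hx : x = ⊤
  · subst hx
    rw [ENNReal.mul_top (by simpa using ha)]; simp
  by_cases hy : y = ⊤
  · subst hy
    rw [ENNReal.mul_top (by simpa using hb)]; simp
  lift x to NNReal using hx
  lift y to NNReal using hy
  have := NNReal.geom_mean_le_arith_mean2_weighted a.toNNReal b.toNNReal x y
    (by rw [← Real.toNNReal_add ha.le hb.le, hab]; simp)
  rw [Real.coe_toNNReal _ ha.le, Real.coe_toNNReal _ hb.le] at this
  rw [← ENNReal.coe_rpow_of_nonneg _ ha.le, ← ENNReal.coe_rpow_of_nonneg _ hb.le]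
  simp only [ENNReal.ofReal]
  exact_mod_cast this

/-- The Prékopa-Leindler inequality on the line for functions of supremum `1`, in its stronger
additive form: the superlevel sets at each height in `(0, 1)` are nonempty, so `bm_real` applies to
them, and the layer-cake formula integrates the result. -/
lemma pl_real_normalized {f g h : ℝ → ℝ≥0∞} (hf : Measurable f) (hg : Measurable g)
    (hh : Measurable h) {a b : ℝ} (ha : 0 < a) (hb : 0 < b) (hab : a + b = 1)
    (hf1 : ⨆ x, f x = 1) (hg1 : ⨆ x, g x = 1)
    (H : ∀ x y, f x ^ a * g y ^ b ≤ h (a * x + b * y)) :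
    ENNReal.ofReal a * (∫⁻ x, f x) + ENNReal.ofReal b * (∫⁻ x, g x) ≤ ∫⁻ x, h x := by
  have layer : ∀ u : ℝ → ℝ≥0∞, Measurable u → (∀ x, u x ≤ 1) →
      ∫⁻ x, u x = ∫⁻ t in Set.Ioo (0:ℝ) 1, volume {x | ENNReal.ofReal t < u x} := by
    intro u hu hu1
    have h1 : ∀ x, u x = ENNReal.ofReal (u x).toReal := fun x =>
      (ENNReal.ofReal_toReal (ne_top_of_le_ne_top one_ne_top (hu1 x))).symm
    calc ∫⁻ x, u x = ∫⁻ x, ENNReal.ofReal (u x).toReal := lintegral_congr h1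
      _ = ∫⁻ t in Set.Ioi (0:ℝ), volume {x | t < (u x).toReal} :=
        lintegral_eq_lintegral_meas_lt _ (Filter.Eventually.of_forall fun x => by simp)
          hu.ennreal_toReal.aemeasurable
      _ = ∫⁻ t in Set.Ioo (0:ℝ) 1, volume {x | t < (u x).toReal} := by
        rw [← Set.Ioo_union_Ici_eq_Ioi (zero_lt_one' ℝ), lintegral_union measurableSet_Ici]
        · have : ∫⁻ t in Set.Ici (1:ℝ), volume {x | t < (u x).toReal} = 0 := by
            rw [setLIntegral_congr_fun measurableSet_Ici (g := fun _ => 0), lintegral_zero]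
            intro t ht
            have : {x | t < (u x).toReal} = ∅ := by
              ext x
              have := ENNReal.toReal_mono one_ne_top (hu1 x)
              simp at this ht ⊢
              linarith
            simp [this]
          rw [this, add_zero]
        · exact Set.disjoint_left.2 fun x hx hx' => absurd hx.2 (not_lt.2 hx')
      _ = _ := by
        refine setLIntegral_congr_fun measurableSet_Ioo fun t ht => ?_
        congr 1; ext x
        exact (ENNReal.ofReal_lt_iff_lt_toReal ht.1.le
          (ne_top_of_le_ne_top one_ne_top (hu1 x))).symm
  have hle : ∀ (u : ℝ → ℝ≥0∞), ⨆ x, u x = 1 → ∀ x, u x ≤ 1 := fun u hu x => hu ▸ le_iSup u x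
  calc _ = ∫⁻ t in Set.Ioo (0:ℝ) 1, (ENNReal.ofReal a * volume {x | ENNReal.ofReal t < f x}
          + ENNReal.ofReal b * volume {x | ENNReal.ofReal t < g x}) := by
        have hm : ∀ u : ℝ → ℝ≥0∞, Measurable fun t : ℝ => volume {x | ENNReal.ofReal t < u x} := by
          intro u
          refine Antitone.measurable fun s t hst => measure_mono fun x hx => ?_
          exact lt_of_le_of_lt (ENNReal.ofReal_le_ofReal hst) hx
        rw [layer f hf (hle f hf1), layer g hg (hle g hg1), lintegral_add_left,
          lintegral_const_mul _ (hm f), lintegral_const_mul _ (hm g)]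
        exact (hm f).const_mul _
    _ ≤ ∫⁻ t in Set.Ioo (0:ℝ) 1, volume {x | ENNReal.ofReal t < min (h x) 1} := by
        refine setLIntegral_mono' measurableSet_Ioo fun t ht => ?_
        have ht1 : ENNReal.ofReal t < 1 := by simpa using ht.2
        refine bm_real (measurableSet_lt measurable_const hf) (measurableSet_lt measurable_const hg)
          ?_ ?_ ha hb ?_
        · rw [← hf1] at ht1; exact lt_iSup_iff.1 ht1
        · rw [← hg1] at ht1; exact lt_iSup_iff.1 ht1
        · intro x hx y hy
          refine lt_min (lt_of_lt_of_le ?_ (H x y)) ht1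
          calc ENNReal.ofReal t = ENNReal.ofReal t ^ a * ENNReal.ofReal t ^ b := by
                rw [← ENNReal.rpow_add_of_nonneg _ _ ha.le hb.le, hab, ENNReal.rpow_one]
            _ < _ := ENNReal.mul_lt_mul (ENNReal.rpow_lt_rpow hx ha) (ENNReal.rpow_lt_rpow hy hb)
    _ = ∫⁻ x, min (h x) 1 := (layer _ (hh.min measurable_const) fun x => min_le_right _ _).symm
    _ ≤ _ := lintegral_mono fun x => min_le_left _ _

/-- The Prékopa-Leindler inequality on the line for bounded functions, by rescaling both to have
supremum `1`. -/
lemma pl_real_bounded {f g h : ℝ → ℝ≥0∞} (hf : Measurable f) (hg : Measurable g)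
    (hh : Measurable h) {a b : ℝ} (ha : 0 < a) (hb : 0 < b) (hab : a + b = 1)
    (hf1 : ⨆ x, f x ≠ ⊤) (hg1 : ⨆ x, g x ≠ ⊤)
    (H : ∀ x y, f x ^ a * g y ^ b ≤ h (a * x + b * y)) :
    (∫⁻ x, f x) ^ a * (∫⁻ x, g x) ^ b ≤ ∫⁻ x, h x := by
  by_cases hf0 : ⨆ x, f x = 0
  · have : f = 0 := by ext x; simpa using (ENNReal.iSup_eq_zero.1 hf0 x)
    simp [this, ha]
  by_cases hg0 : ⨆ x, g x = 0
  · have : g = 0 := by ext x; simpa using (ENNReal.iSup_eq_zero.1 hg0 x)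
    simp [this, hb]
  set M := ⨆ x, f x
  set N := ⨆ x, g x
  have hMN0 : M ^ a * N ^ b ≠ 0 := by
    simp [hf0, hg0, hf1, hg1]
  have hMNt : M ^ a * N ^ b ≠ ⊤ :=
    ENNReal.mul_ne_top (ENNReal.rpow_ne_top_of_nonneg ha.le hf1)
      (ENNReal.rpow_ne_top_of_nonneg hb.le hg1)
  have hinv : (M⁻¹) ^ a * (N⁻¹) ^ b = (M ^ a * N ^ b)⁻¹ := by
    rw [ENNReal.inv_rpow, ENNReal.inv_rpow, ENNReal.mul_inv]
    · simp [hf0, hf1]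
    · simp [hf0, hf1]
  have := pl_real_normalized (f := fun x => M⁻¹ * f x) (g := fun x => N⁻¹ * g x)
    (h := fun x => (M ^ a * N ^ b)⁻¹ * h x) (hf.const_mul _) (hg.const_mul _) (hh.const_mul _)
    ha hb hab (by rw [← ENNReal.mul_iSup]; exact ENNReal.inv_mul_cancel hf0 hf1)
    (by rw [← ENNReal.mul_iSup]; exact ENNReal.inv_mul_cancel hg0 hg1)
    (fun x y => by
      rw [ENNReal.mul_rpow_of_nonneg _ _ ha.le, ENNReal.mul_rpow_of_nonneg _ _ hb.le,
        mul_mul_mul_comm, hinv]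
      gcongr
      exact H x y)
  replace this := (ennreal_young ha hb hab _ _).trans this
  rw [lintegral_const_mul _ hf, lintegral_const_mul _ hg, lintegral_const_mul _ hh,
    ENNReal.mul_rpow_of_nonneg _ _ ha.le, ENNReal.mul_rpow_of_nonneg _ _ hb.le,
    mul_mul_mul_comm, hinv] at this
  exact (ENNReal.mul_le_mul_iff_right (by simp [hMNt]) (by simpa using hMN0)).1 this

/-- The Prékopa-Leindler inequality on the line; truncation at height `k` reduces it to bounded
functions. -/
lemma pl_real {f g h : ℝ → ℝ≥0∞} (hf : Measurable f) (hg : Measurable g)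
    (hh : Measurable h) {a b : ℝ} (ha : 0 < a) (hb : 0 < b) (hab : a + b = 1)
    (H : ∀ x y, f x ^ a * g y ^ b ≤ h (a * x + b * y)) :
    (∫⁻ x, f x) ^ a * (∫⁻ x, g x) ^ b ≤ ∫⁻ x, h x := by
  have trunc : ∀ (u : ℝ → ℝ≥0∞) (c : ℝ), 0 < c → Measurable u →
      (∫⁻ x, u x) ^ c = ⨆ k : ℕ, (∫⁻ x, min (u x) k) ^ c := by
    intro u c hc hu
    have h1 : ∫⁻ x, u x = ⨆ k : ℕ, ∫⁻ x, min (u x) k := by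
      rw [← lintegral_iSup (fun k => hu.min measurable_const)]
      · congr 1; ext x
        rw [← inf_iSup_eq, ENNReal.iSup_natCast, inf_top_eq]
      · intro k l hkl x
        exact min_le_min_left _ (by exact_mod_cast hkl)
    rw [h1]
    exact (ENNReal.orderIsoRpow c hc).map_iSup _
  rw [trunc f a ha hf, trunc g b hb hg, ENNReal.iSup_mul]
  refine iSup_le fun k => ?_
  rw [ENNReal.mul_iSup]
  refine iSup_le fun l => ?_
  have hsup : ∀ (u : ℝ → ℝ≥0∞) (k : ℕ), ⨆ x, min (u x) (k : ℝ≥0∞) ≠ ⊤ := fun u k =>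
    ne_top_of_le_ne_top (ENNReal.natCast_ne_top k) (iSup_le fun x => min_le_right _ _)
  refine pl_real_bounded (hf.min measurable_const) (hg.min measurable_const) hh ha hb hab
    (hsup f k) (hsup g l) fun x y => le_trans ?_ (H x y)
  gcongr <;> exact min_le_left _ _

/-- The Prékopa-Leindler inequality in several variables: the hypothesis passes to partial
integrals over the coordinates in `s`, one coordinate at a time. With `s = univ` the marginals are
full integrals. -/
lemma pl_lmarginal {ι : Type*} [Fintype ι] [DecidableEq ι] {f g h : (ι → ℝ) → ℝ≥0∞}
    (hf : Measurable f) (hg : Measurable g) (hh : Measurable h)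
    {a b : ℝ} (ha : 0 < a) (hb : 0 < b) (hab : a + b = 1)
    (H : ∀ x y, f x ^ a * g y ^ b ≤ h (a • x + b • y)) (s : Finset ι) (x y : ι → ℝ) :
    ((∫⋯∫⁻_s, f ∂fun _ => volume) x) ^ a * ((∫⋯∫⁻_s, g ∂fun _ => volume) y) ^ b
      ≤ (∫⋯∫⁻_s, h ∂fun _ => volume) (a • x + b • y) := by
  induction s using Finset.induction_on generalizing x y with
  | empty => simpa using H x y
  | insert i s hi ih =>
    rw [lmarginal_insert _ hf hi, lmarginal_insert _ hg hi, lmarginal_insert _ hh hi]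
    have hm : ∀ {u : (ι → ℝ) → ℝ≥0∞} (z : ι → ℝ), Measurable u → Measurable
        fun t : ℝ => (∫⋯∫⁻_s, u ∂fun _ => volume) (Function.update z i t) := fun z hu =>
      (hu.lmarginal _).comp (measurable_update z)
    refine pl_real (hm x hf) (hm y hg) (hm _ hh) ha hb hab fun t t' => ?_
    refine (ih _ _).trans (le_of_eq ?_)
    congr 1
    ext j
    by_cases hj : j = i
    · subst hj; simp
    · simp [hj]

/-- The dimension-free Brunn-Minkowski inequality, that is, Prékopa-Leindler for indicator
functions. -/
lemma bm_mul {n : ℕ} {A B C : Set (EuclideanSpace ℝ (Fin n))} (hA : MeasurableSet A)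
    (hB : MeasurableSet B) (hC : MeasurableSet C) {a b : ℝ} (ha : 0 < a) (hb : 0 < b)
    (hab : a + b = 1) (h : ∀ x ∈ A, ∀ y ∈ B, a • x + b • y ∈ C) :
    volume A ^ a * volume B ^ b ≤ volume C := by
  let T := WithLp.toLp (V := Fin n → ℝ) 2
  have key : ∀ S : Set (EuclideanSpace ℝ (Fin n)), MeasurableSet S →
      volume S = (∫⋯∫⁻_Finset.univ, (T ⁻¹' S).indicator 1 ∂fun _ => volume) 0 ∧
      Measurable ((T ⁻¹' S).indicator (1 : (Fin n → ℝ) → ℝ≥0∞)) := by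
    intro S hS
    have hS' : MeasurableSet (T ⁻¹' S) := (PiLp.volume_preserving_toLp (Fin n)).measurable hS
    refine ⟨?_, measurable_one.indicator hS'⟩
    rw [lmarginal_univ, lintegral_indicator_one hS']
    exact ((PiLp.volume_preserving_toLp (Fin n)).measure_preimage hS.nullMeasurableSet).symm
  rw [(key A hA).1, (key B hB).1, (key C hC).1]
  have := pl_lmarginal (key A hA).2 (key B hB).2 (key C hC).2 ha hb hab (fun x y => ?_)
    Finset.univ 0 0
  · simpa using this
  · by_cases hx : x ∈ T ⁻¹' A
    · by_cases hy : y ∈ T ⁻¹' B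
      · have : a • x + b • y ∈ T ⁻¹' C := h _ hx _ hy
        rw [Set.indicator_of_mem hx, Set.indicator_of_mem hy, Set.indicator_of_mem this]
        simp
      · rw [Set.indicator_of_notMem hy]; simp [hb]
    · rw [Set.indicator_of_notMem hx]; simp [ha]

/-! ### The Milman-Pajor inequality -/

/-- The overlap function of `K`: the volume of `K ∩ (z - K)`. Up to normalization it is the density of
the sum of two independent uniform points of `K`. -/
noncomputable def overlap {n : ℕ} (K : Set (EuclideanSpace ℝ (Fin n)))
    (z : EuclideanSpace ℝ (Fin n)) : ℝ :=
  volume.real {x | x ∈ K ∧ z - x ∈ K}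

section MilmanPajor

variable {n : ℕ} {K : Set (EuclideanSpace ℝ (Fin n))}

lemma measurableSet_overlap (hK : IsCompact K) (z : EuclideanSpace ℝ (Fin n)) :
    MeasurableSet {x | x ∈ K ∧ z - x ∈ K} :=
  hK.measurableSet.inter ((measurable_const.sub measurable_id) hK.measurableSet)

lemma volume_overlap_ne_top (hK : IsCompact K) (z : EuclideanSpace ℝ (Fin n)) :
    volume {x | x ∈ K ∧ z - x ∈ K} ≠ ⊤ :=
  ne_top_of_le_ne_top hK.measure_lt_top.ne (measure_mono fun _ hx => hx.1)

lemma overlap_eq_integral (hK : IsCompact K) (z : EuclideanSpace ℝ (Fin n)) :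
    overlap K z = ∫ x in K, K.indicator (fun _ => (1 : ℝ)) (z - x) := by
  have h1 : (fun x => K.indicator (fun _ => (1 : ℝ)) (z - x))
      = ({x | z - x ∈ K} : Set (EuclideanSpace ℝ (Fin n))).indicator 1 := by
    ext x; by_cases hx : z - x ∈ K <;> simp [hx]
  have hm : MeasurableSet {x | z - x ∈ K} :=
    (measurable_const.sub measurable_id) hK.measurableSet
  rw [h1, integral_indicator_one hm, measureReal_restrict_apply hm, Set.inter_comm]
  rfl

/-- Continuity holds because the boundary of a convex set is Lebesgue null. -/
lemma continuous_overlap (hK : IsCompact K) (hc : Convex ℝ K) : Continuous (overlap K) := by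
  have : overlap K = fun z => ∫ x in K, K.indicator (fun _ => (1 : ℝ)) (z - x) :=
    funext (overlap_eq_integral hK)
  rw [this]
  have hfin : IsFiniteMeasure (volume.restrict K) := ⟨by simpa using hK.measure_lt_top⟩
  refine continuous_iff_continuousAt.2 fun z₀ => ?_
  refine continuousAt_of_dominated (bound := fun _ => 1) ?_ ?_ (integrable_const _) ?_
  · refine Filter.Eventually.of_forall fun z => ?_
    exact ((measurable_const.indicator hK.measurableSet).comp
      (measurable_const.sub measurable_id)).aestronglyMeasurable
  · refine Filter.Eventually.of_forall fun z => Filter.Eventually.of_forall fun x => ?_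
    by_cases hx : z - x ∈ K <;> simp [hx]
  · refine ae_restrict_of_ae ?_
    have h0 : volume ((fun x => z₀ - x) ⁻¹' frontier K) = 0 := by
      rw [(Measure.measurePreserving_sub_left volume z₀).measure_preimage
        isClosed_frontier.measurableSet.nullMeasurableSet]
      exact hc.addHaar_frontier volume
    filter_upwards [measure_eq_zero_iff_ae_notMem.1 h0] with x hx
    have h1 : ContinuousAt (K.indicator fun _ => (1 : ℝ)) (z₀ - x) :=
      (continuous_const.continuousOn).continuousAt_indicator hx
    exact ContinuousAt.comp (f := fun z => z - x) h1 (by fun_prop)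

lemma overlap_logconcave (hK : IsCompact K) (hc : Convex ℝ K) (z w : EuclideanSpace ℝ (Fin n))
    {a b : ℝ} (ha : 0 < a) (hb : 0 < b) (hab : a + b = 1) :
    overlap K z ^ a * overlap K w ^ b ≤ overlap K (a • z + b • w) := by
  have := bm_mul (measurableSet_overlap hK z) (measurableSet_overlap hK w)
    (measurableSet_overlap hK (a • z + b • w)) ha hb hab (fun x hx y hy => by
      refine ⟨hc hx.1 hy.1 ha.le hb.le hab, ?_⟩
      have := hc hx.2 hy.2 ha.le hb.le hab
      convert this using 1
      module)
  have := ENNReal.toReal_mono (volume_overlap_ne_top hK _) this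
  rwa [ENNReal.toReal_mul, ← ENNReal.toReal_rpow, ← ENNReal.toReal_rpow] at this

open ProbabilityTheory in
/-- The sum of two independent uniform points of `K` has density `overlap K / vol(K) ^ 2`. -/
lemma lintegral_conv_cond (hK : IsCompact K) (hK0 : volume K ≠ 0)
    {φ : EuclideanSpace ℝ (Fin n) → ℝ≥0∞}
    (hφ : Measurable φ) :
    ∫⁻ z, φ z ∂(volume[|K] ∗ volume[|K])
      = (volume K)⁻¹ * (volume K)⁻¹ * ∫⁻ z, φ z * ENNReal.ofReal (overlap K z) := by
  have hKm := hK.measurableSet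
  have step : ∀ x, ∫⁻ y in K, φ (x + y) = ∫⁻ z, K.indicator (fun _ => (1:ℝ≥0∞)) (z - x) * φ z := by
    intro x
    rw [← lintegral_indicator hKm,
      ← lintegral_sub_right_eq_self (fun y => K.indicator (fun y => φ (x + y)) y) x]
    refine lintegral_congr fun z => ?_
    by_cases hz : z - x ∈ K <;> simp [hz]
  have hmeas : Measurable fun p : EuclideanSpace ℝ (Fin n) × EuclideanSpace ℝ (Fin n) =>
      K.indicator (fun _ => (1:ℝ≥0∞)) (p.2 - p.1) * φ p.2 :=
    ((measurable_const.indicator hKm).comp (measurable_snd.sub measurable_fst)).mul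
      (hφ.comp measurable_snd)
  rw [Measure.lintegral_conv hφ, ProbabilityTheory.cond, lintegral_smul_measure]
  simp only [lintegral_smul_measure, smul_eq_mul]
  rw [lintegral_const_mul']
  · simp only [step]
    rw [lintegral_lintegral_swap hmeas.aemeasurable, ← mul_assoc]
    congr 1
    refine lintegral_congr fun z => ?_
    have hm : MeasurableSet {x | z - x ∈ K} :=
      (measurable_const.sub measurable_id) hK.measurableSet
    have h1 : (fun x => K.indicator (fun _ => (1:ℝ≥0∞)) (z - x))
        = ({x | z - x ∈ K} : Set (EuclideanSpace ℝ (Fin n))).indicator 1 := by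
      ext x; by_cases hx : z - x ∈ K <;> simp [hx]
    rw [lintegral_mul_const, mul_comm, h1, lintegral_indicator_one hm,
      Measure.restrict_apply hm, Set.inter_comm, overlap, measureReal_def, ENNReal.ofReal_toReal]
    · rfl
    · exact volume_overlap_ne_top hK z
    · exact (measurable_const.indicator hKm).comp (measurable_const.sub measurable_id)
  · simpa using hK0

open ProbabilityTheory in
/-- The Milman-Pajor inequality: a convex body with barycenter at the origin loses at most a factor
`2 ^ n` in volume when intersected with its reflection. -/
theorem milman_pajor (hK : IsCompact K) (hc : Convex ℝ K) (hint : (interior K).Nonempty)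
    (hbar : ∫ x in K, x = 0) :
    volume.real K ≤ 2 ^ n * volume.real {x | x ∈ K ∧ -x ∈ K} := by
  have hKm := hK.measurableSet
  have hK0 : volume K ≠ 0 := (Measure.measure_pos_of_nonempty_interior _ hint).ne'
  have hKt : volume K ≠ ⊤ := hK.measure_lt_top.ne
  have hprob : IsProbabilityMeasure (volume[|K]) := cond_isProbabilityMeasure_of_finite hK0 hKt
  set V := volume.real K with hV
  have hVpos : 0 < V := ENNReal.toReal_pos hK0 hKt
  set ρ := volume[|K] ∗ volume[|K] with hρ
  have hFc := continuous_overlap hK hc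
  have hF0 : ∀ z, 0 ≤ overlap K z := fun z => ENNReal.toReal_nonneg
  have hFV : ∀ z, overlap K z ≤ V := fun z =>
    ENNReal.toReal_mono hKt (measure_mono fun _ hx => hx.1)
  set τ := V / 2 ^ n with hτ
  have hτ0 : 0 < τ := by positivity
  -- `τ / overlap` has mean at most one under `ρ`, since `overlap K` vanishes outside `2K`
  have hmass : ∫⁻ z, ENNReal.ofReal (τ / overlap K z) ∂ρ ≤ 1 := by
    rw [hρ, lintegral_conv_cond hK hK0 (by fun_prop)]
    calc _ ≤ (volume K)⁻¹ * (volume K)⁻¹ *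
        ∫⁻ z, ((2 : ℝ) • K).indicator (fun _ => ENNReal.ofReal τ) z := by
          gcongr with z
          by_cases hz : overlap K z = 0
          · simp [hz]
          · have : z ∈ (2 : ℝ) • K := by
              have : {x | x ∈ K ∧ z - x ∈ K}.Nonempty := by
                by_contra h
                rw [Set.not_nonempty_iff_eq_empty] at h
                exact hz (by simp [overlap, h])
              obtain ⟨x, hx, hx'⟩ := this
              refine ⟨(1 / 2 : ℝ) • x + (1 / 2 : ℝ) • (z - x),
                hc hx hx' (by norm_num) (by norm_num) (by norm_num), ?_⟩
              simp only; module
            rw [Set.indicator_of_mem this, ← ENNReal.ofReal_mul (div_nonneg hτ0.le (hF0 z)),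
              div_mul_cancel₀ _ hz]
      _ = (volume K)⁻¹ * (volume K)⁻¹ * (ENNReal.ofReal τ * (ENNReal.ofReal (2 ^ n) * volume K)) := by
          have hm2 : MeasurableSet ((2:ℝ) • K) := (hK.smul 2).measurableSet
          rw [lintegral_indicator hm2, setLIntegral_const, Measure.addHaar_smul]
          simp
      _ = 1 := by
          have hKV : volume K = ENNReal.ofReal V := (ENNReal.ofReal_toReal hKt).symm
          rw [hKV, ← ENNReal.ofReal_inv_of_pos hVpos, ← ENNReal.ofReal_mul (by positivity),
            ← ENNReal.ofReal_mul (by positivity), ← ENNReal.ofReal_mul (by positivity),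
            ← ENNReal.ofReal_mul (by positivity), hτ, ← ENNReal.ofReal_one]
          congr 1
          field_simp
  have hpos : ∀ᵐ z ∂ρ, 0 < overlap K z := by
    have hm : MeasurableSet {z | overlap K z = 0} := hFc.measurable (measurableSet_singleton 0)
    have : ρ {z | overlap K z = 0} = 0 := by
      rw [← lintegral_indicator_one hm, hρ, lintegral_conv_cond hK hK0 (measurable_one.indicator hm)]
      have : ∀ z, {z | overlap K z = 0}.indicator 1 z * ENNReal.ofReal (overlap K z) = 0 := by
        intro z
        by_cases hz : overlap K z = 0 <;> simp [hz]
      simp [this]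
    filter_upwards [measure_eq_zero_iff_ae_notMem.1 this] with z hz
    exact lt_of_le_of_ne (hF0 z) (Ne.symm hz)
  have hint1 : Integrable (fun z => τ / overlap K z) ρ := by
    refine ⟨(hFc.measurable.const_div τ).aestronglyMeasurable, ?_⟩
    rw [hasFiniteIntegral_iff_ofReal (Filter.Eventually.of_forall fun z =>
      div_nonneg hτ0.le (hF0 z))]
    exact lt_of_le_of_lt hmass one_lt_top
  have hint1_le : ∫ z, τ / overlap K z ∂ρ ≤ 1 := by
    rw [integral_eq_lintegral_of_nonneg_ae (Filter.Eventually.of_forall fun z =>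
      div_nonneg hτ0.le (hF0 z)) hint1.1]
    exact ENNReal.toReal_le_of_le_ofReal zero_le_one (by simpa using hmass)
  -- `1 - 1 / t ≤ log t` turns that mass bound into a lower bound for the mean of `log`
  have hlow : ∀ z, 0 < overlap K z → 1 - τ / overlap K z ≤ Real.log (overlap K z / τ) := by
    intro z hz
    have := Real.one_sub_inv_le_log_of_pos (div_pos hz hτ0)
    rwa [inv_div] at this
  have hup : ∀ z, 0 < overlap K z → Real.log (overlap K z / τ) ≤ Real.log (V / τ) := by
    intro z hz
    exact Real.log_le_log (by positivity) (by gcongr; exact hFV z)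
  have hint2 : Integrable (fun z => Real.log (overlap K z / τ)) ρ := by
    refine Integrable.mono' (g := fun z => |Real.log (V / τ)| + 1 + τ / overlap K z)
      ((integrable_const _).add hint1) ?_ ?_
    · exact (Real.measurable_log.comp (hFc.measurable.div_const τ)).aestronglyMeasurable
    · filter_upwards [hpos] with z hz
      rw [Real.norm_eq_abs, abs_le]
      have h1 := hlow z hz
      have h2 := hup z hz
      have h3 := le_abs_self (Real.log (V / τ))
      have h4 := abs_nonneg (Real.log (V / τ))
      have h5 : 0 ≤ τ / overlap K z := by positivity
      constructor <;> linarith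
  have hent : 0 ≤ ∫ z, Real.log (overlap K z / τ) ∂ρ := by
    have h1 : ∫ z, (1 - τ / overlap K z) ∂ρ ≤ ∫ z, Real.log (overlap K z / τ) ∂ρ := by
      refine integral_mono_ae ((integrable_const _).sub hint1) hint2 ?_
      filter_upwards [hpos] with z hz using hlow z hz
    rw [integral_sub (integrable_const _) hint1] at h1
    simp at h1
    linarith
  have hid : Integrable (fun z : EuclideanSpace ℝ (Fin n) => z) (volume[|K]) := by
    refine Integrable.smul_measure ?_ (by simp [hK0])
    exact continuous_id.continuousOn.integrableOn_compact hK
  have hid0 : ∫ z, z ∂(volume[|K]) = 0 := by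
    rw [ProbabilityTheory.cond, integral_smul_measure, hbar, smul_zero]
  have hidρ : Integrable (fun z : EuclideanSpace ℝ (Fin n) => z) ρ := by
    rw [hρ, Measure.conv, integrable_map_measure (by fun_prop) (by fun_prop)]
    exact (hid.comp_fst _).add (hid.comp_snd _)
  have hmean : ∫ z, z ∂ρ = 0 := by
    rw [hρ, integral_conv hidρ]
    have : ∀ x, ∫ y, (x + y) ∂(volume[|K]) = x := by
      intro x
      rw [integral_add (integrable_const _) hid, hid0]; simp
    simp only [this, hid0]
  -- the hypograph of `log (overlap / τ)`, written so that it is closed and avoids `log 0`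
  let H : Set (EuclideanSpace ℝ (Fin n) × ℝ) := {p | τ * Real.exp p.2 ≤ overlap K p.1}
  have hHclosed : IsClosed H := isClosed_le (by fun_prop) (by fun_prop)
  have hHconv : Convex ℝ H := by
    refine convex_iff_forall_pos.2 fun p hp q hq a b ha hb hab => ?_
    have := overlap_logconcave hK hc p.1 q.1 ha hb hab
    refine le_trans ?_ this
    calc τ * Real.exp (a * p.2 + b * q.2)
        = (τ * Real.exp p.2) ^ a * (τ * Real.exp q.2) ^ b := by
          rw [Real.mul_rpow hτ0.le (Real.exp_pos _).le, Real.mul_rpow hτ0.le (Real.exp_pos _).le,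
            mul_mul_mul_comm, ← Real.rpow_add hτ0, hab, Real.rpow_one, ← Real.exp_mul,
            ← Real.exp_mul, ← Real.exp_add]
          ring_nf
      _ ≤ _ := by
          have h1 : 0 ≤ τ * Real.exp p.2 := by positivity
          have h2 : 0 ≤ τ * Real.exp q.2 := by positivity
          exact mul_le_mul (Real.rpow_le_rpow h1 hp ha.le) (Real.rpow_le_rpow h2 hq hb.le)
            (by positivity) (Real.rpow_nonneg (hF0 _) _)
  have hmem := hHconv.integral_mem (μ := ρ) hHclosed
    (f := fun z => (z, Real.log (overlap K z / τ))) (by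
      filter_upwards [hpos] with z hz
      change τ * Real.exp (Real.log (overlap K z / τ)) ≤ overlap K z
      rw [Real.exp_log (by positivity), mul_div_cancel₀ _ hτ0.ne']) (hidρ.prodMk hint2)
  have hmem' : τ * Real.exp (∫ z, Real.log (overlap K z / τ) ∂ρ) ≤ overlap K 0 := by
    have h1 : (∫ z, (z, Real.log (overlap K z / τ)) ∂ρ).1 = 0 := by
      rw [fst_integral (hidρ.prodMk hint2)]; exact hmean
    have h2 : (∫ z, (z, Real.log (overlap K z / τ)) ∂ρ).2
        = ∫ z, Real.log (overlap K z / τ) ∂ρ := snd_integral (hidρ.prodMk hint2)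
    rw [← h2, ← h1]; exact hmem
  have h0 : τ ≤ overlap K 0 := by
    refine le_trans ?_ hmem'
    exact le_mul_of_one_le_right hτ0.le (Real.one_le_exp hent)
  rw [hτ, div_le_iff₀ (by positivity)] at h0
  simpa [overlap, mul_comm] using h0

end MilmanPajor

/-! ### Second moments and random determinants -/

section SecondMoment

variable {n : ℕ}

open Matrix

/-- The matrix of second moments `E (x i * x j)` of `μ`. It is not centered; for a law symmetric about
the origin it is the covariance matrix. -/
noncomputable def momentMatrix (μ : Measure (EuclideanSpace ℝ (Fin n))) :
    Matrix (Fin n) (Fin n) ℝ :=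
  Matrix.of fun i j => ∫ x, x i * x j ∂μ

/-- The expansion of the square of a determinant with i.i.d. columns, after taking expectations:
each of the `n!` permutations `τ` contributes one copy of `det M`. -/
lemma sum_perm_eq_factorial_mul_det (M : Matrix (Fin n) (Fin n) ℝ) :
    ∑ τ : Equiv.Perm (Fin n), ∑ σ : Equiv.Perm (Fin n),
      ((Equiv.Perm.sign σ : ℤ) : ℝ) * ((Equiv.Perm.sign τ : ℤ) : ℝ) * ∏ i, M (σ i) (τ i)
      = n.factorial * M.det := by
  have h : ∀ τ : Equiv.Perm (Fin n), ∑ σ : Equiv.Perm (Fin n),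
      ((Equiv.Perm.sign σ : ℤ) : ℝ) * ((Equiv.Perm.sign τ : ℤ) : ℝ) * ∏ i, M (σ i) (τ i)
      = M.det := by
    intro τ
    have h1 := Matrix.det_permute' τ M
    rw [Matrix.det_apply'] at h1
    have h2 : (((Equiv.Perm.sign τ : ℤ) : ℝ)) * ((Equiv.Perm.sign τ : ℤ) : ℝ) = 1 := by
      rcases Int.units_eq_one_or (Equiv.Perm.sign τ) with h | h <;> simp [h]
    calc _ = ((Equiv.Perm.sign τ : ℤ) : ℝ) * ∑ σ : Equiv.Perm (Fin n),
          ((Equiv.Perm.sign σ : ℤ) : ℝ) * ∏ i, M.submatrix id τ (σ i) i := by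
          rw [Finset.mul_sum]
          refine Finset.sum_congr rfl fun σ _ => ?_
          simp only [Matrix.submatrix_apply, id]
          ring
      _ = M.det := by rw [h1, ← mul_assoc, h2, one_mul]
  rw [Finset.sum_congr rfl fun τ _ => h τ]
  simp [Fintype.card_perm]

/-- The expectation of `det(x) ^ 2` over independent columns `x i` of law `μ` is `n! * det M`, so
some choice of columns in `L` does at least as well as the average. -/
lemma exists_det_sq_ge {L : Set (EuclideanSpace ℝ (Fin n))}
    (μ : Measure (EuclideanSpace ℝ (Fin n))) [IsProbabilityMeasure μ] (hμ : ∀ᵐ x ∂μ, x ∈ L)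
    (hi : ∀ i j, Integrable (fun x : EuclideanSpace ℝ (Fin n) => x i * x j) μ) :
    ∃ x : Fin n → EuclideanSpace ℝ (Fin n), (∀ i, x i ∈ L) ∧
      n.factorial * (momentMatrix μ).det ≤ (Matrix.of fun i j => x j i).det ^ 2 := by
  let ν := Measure.pi fun _ : Fin n => μ
  have hexp : ∀ x : Fin n → EuclideanSpace ℝ (Fin n), (Matrix.of fun i j => x j i).det ^ 2
      = ∑ τ : Equiv.Perm (Fin n), ∑ σ : Equiv.Perm (Fin n),
        ((Equiv.Perm.sign σ : ℤ) : ℝ) * ((Equiv.Perm.sign τ : ℤ) : ℝ) *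
          ∏ i, (x i (σ i) * x i (τ i)) := by
    intro x
    rw [sq, Matrix.det_apply', Finset.sum_mul_sum, Finset.sum_comm]
    refine Finset.sum_congr rfl fun τ _ => Finset.sum_congr rfl fun σ _ => ?_
    simp only [Matrix.of_apply, Finset.prod_mul_distrib]
    ring
  have hI : ∀ τ σ : Equiv.Perm (Fin n), Integrable
      (fun x : Fin n → EuclideanSpace ℝ (Fin n) => ∏ i, (x i (σ i) * x i (τ i))) ν :=
    fun τ σ => Integrable.fintype_prod
      (f := fun i (y : EuclideanSpace ℝ (Fin n)) => y (σ i) * y (τ i)) fun i => hi _ _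
  have hint : Integrable (fun x : Fin n → EuclideanSpace ℝ (Fin n) =>
      (Matrix.of fun i j => x j i).det ^ 2) ν := by
    simp only [hexp]
    exact integrable_finsetSum _ fun τ _ => integrable_finsetSum _ fun σ _ =>
      (hI τ σ).const_mul _
  have hval : ∫ x, (Matrix.of fun i j => x j i).det ^ 2 ∂ν
      = n.factorial * (momentMatrix μ).det := by
    simp only [hexp]
    rw [integral_finsetSum _ fun τ _ => integrable_finsetSum _ fun σ _ => (hI τ σ).const_mul _,
      ← sum_perm_eq_factorial_mul_det]
    refine Finset.sum_congr rfl fun τ _ => ?_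
    rw [integral_finsetSum _ fun σ _ => (hI τ σ).const_mul _]
    refine Finset.sum_congr rfl fun σ _ => ?_
    rw [integral_const_mul, integral_fintype_prod_eq_prod
      (f := fun i (y : EuclideanSpace ℝ (Fin n)) => y (σ i) * y (τ i))]
    rfl
  have hae : ∀ᵐ x ∂ν, ∀ i, x i ∈ L := by
    rw [ae_all_iff]
    intro i
    exact (Measure.quasiMeasurePreserving_eval (μ := fun _ : Fin n => μ) i).ae hμ
  obtain ⟨x, hx, hx'⟩ := exists_notMem_null_integral_le hint (ae_iff.1 hae)
  exact ⟨x, by simpa using hx, hval ▸ hx'⟩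

lemma momentMatrix_dotProduct (μ : Measure (EuclideanSpace ℝ (Fin n)))
    (hi : ∀ i j, Integrable (fun x : EuclideanSpace ℝ (Fin n) => x i * x j) μ) (v w : Fin n → ℝ) :
    v ⬝ᵥ (momentMatrix μ *ᵥ w) = ∫ x : EuclideanSpace ℝ (Fin n),
      (∑ i, v i * x i) * (∑ i, w i * x i) ∂μ := by
  have : ∀ x : EuclideanSpace ℝ (Fin n), (∑ i, v i * x i) * (∑ i, w i * x i)
      = ∑ i, ∑ j, (v i * w j) * (x i * x j) := by
    intro x
    rw [Finset.sum_mul_sum]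
    exact Finset.sum_congr rfl fun i _ => Finset.sum_congr rfl fun j _ => by ring
  simp only [this]
  rw [integral_finsetSum _ fun i _ => integrable_finsetSum _ fun j _ => (hi i j).const_mul _]
  simp only [dotProduct, mulVec]
  refine Finset.sum_congr rfl fun i _ => ?_
  rw [integral_finsetSum _ fun j _ => (hi i j).const_mul _, Finset.mul_sum]
  refine Finset.sum_congr rfl fun j _ => ?_
  rw [integral_const_mul]
  simp only [momentMatrix, of_apply]
  ring

open ProbabilityTheory

lemma integrable_coord_mul {L : Set (EuclideanSpace ℝ (Fin n))} (hL : IsCompact L)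
    (hL0 : volume L ≠ 0) (i j : Fin n) :
    Integrable (fun x : EuclideanSpace ℝ (Fin n) => x i * x j) (volume[|L]) := by
  refine Integrable.smul_measure ?_ (by simp [hL0])
  have : Continuous fun x : EuclideanSpace ℝ (Fin n) => x i * x j := by fun_prop
  exact this.continuousOn.integrableOn_compact hL

/-- A degenerate direction would put `L` almost surely into a hyperplane, which is null. -/
lemma momentMatrix_posDef {L : Set (EuclideanSpace ℝ (Fin n))} (hL : IsCompact L)
    (hL0 : volume L ≠ 0) : (momentMatrix (volume[|L])).PosDef := by
  have hi := integrable_coord_mul hL hL0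
  refine PosDef.of_dotProduct_mulVec_pos ?_ fun v hv => ?_
  · ext i j
    simp [momentMatrix, mul_comm]
  · simp only [star_trivial]
    rw [momentMatrix_dotProduct _ hi]
    have hnn : 0 ≤ fun x : EuclideanSpace ℝ (Fin n) => (∑ i, v i * x i) * (∑ i, v i * x i) :=
      fun x => mul_self_nonneg _
    have hint : Integrable (fun x : EuclideanSpace ℝ (Fin n) =>
        (∑ i, v i * x i) * (∑ i, v i * x i)) (volume[|L]) := by
      refine Integrable.smul_measure ?_ (by simp [hL0])
      have : Continuous fun x : EuclideanSpace ℝ (Fin n) =>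
        (∑ i, v i * x i) * (∑ i, v i * x i) := by fun_prop
      exact this.continuousOn.integrableOn_compact hL
    refine lt_of_le_of_ne (integral_nonneg hnn) fun h => ?_
    rw [eq_comm, integral_eq_zero_iff_of_nonneg hnn hint] at h
    let W : Submodule ℝ (EuclideanSpace ℝ (Fin n)) := (ℝ ∙ (WithLp.toLp 2 v))ᗮ
    have hW : volume (W : Set (EuclideanSpace ℝ (Fin n))) = 0 := by
      refine Measure.addHaar_submodule _ _ ?_
      rw [Ne, Submodule.orthogonal_eq_top_iff, Submodule.span_singleton_eq_bot]
      simpa using hv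
    have h1 : ∀ᵐ x ∂(volume[|L]), x ∈ (W : Set (EuclideanSpace ℝ (Fin n))) := by
      filter_upwards [h] with x hx
      have hx' : ∑ i, v i * x i = 0 := by simpa using hx
      simp only [W, SetLike.mem_coe, Submodule.mem_orthogonal_singleton_iff_inner_right]
      rw [PiLp.inner_apply]
      simpa [mul_comm] using hx'
    have h2 : ∀ᵐ x ∂(volume[|L]), x ∉ (W : Set (EuclideanSpace ℝ (Fin n))) :=
      measure_eq_zero_iff_ae_notMem.1 (cond_absolutelyContinuous hW)
    have hprob : IsProbabilityMeasure (volume[|L]) :=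
      cond_isProbabilityMeasure_of_finite hL0 hL.measure_lt_top.ne
    obtain ⟨x, hx, hx'⟩ := (h1.and h2).exists
    exact hx' hx

open scoped MatrixOrder in
/-- Among laws with a given second moment matrix, the Gaussian has the largest entropy, and the entropy
of the uniform law on `L` is `log (vol L)`. The proof integrates the whitened Gaussian weight
`exp (-‖C x‖ ^ 2 / 2)` over `L`: Jensen bounds the average below by `exp (-n / 2)`, and the Gaussian
integral over the whole space bounds it above. -/
lemma volume_sq_le_det {L : Set (EuclideanSpace ℝ (Fin n))} (hL : IsCompact L)
    (hL0 : volume L ≠ 0) :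
    volume.real L ^ 2 ≤ (2 * Real.pi * Real.exp 1) ^ n * (momentMatrix (volume[|L])).det := by
  have hpd := momentMatrix_posDef hL hL0
  have hprob : IsProbabilityMeasure (volume[|L]) :=
    cond_isProbabilityMeasure_of_finite hL0 hL.measure_lt_top.ne
  have hi := integrable_coord_mul hL hL0
  set M := momentMatrix (volume[|L]) with hM
  obtain ⟨B, hB⟩ := CStarAlgebra.nonneg_iff_eq_star_mul_self.1 hpd.posSemidef.nonneg
  have hBt : star B = Bᵀ := by ext i j; simp [star_apply]
  rw [hBt] at hB
  have hdet : M.det = B.det ^ 2 := by rw [hB, det_mul, det_transpose, sq]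
  have hBdet : B.det ≠ 0 := by
    intro h; have := hpd.det_pos; rw [hdet, h] at this; simp at this
  have hBu : IsUnit B.det := isUnit_iff_ne_zero.2 hBdet
  set C := (B⁻¹)ᵀ with hC
  have hCdet : C.det = B.det⁻¹ := by rw [hC, det_transpose, det_nonsing_inv, Ring.inverse_eq_inv']
  -- `C` whitens the second moment matrix
  have hCM : C * M * Cᵀ = 1 := by
    rw [hC, hB, transpose_transpose, ← Matrix.mul_assoc, ← transpose_mul, mul_nonsing_inv _ hBu,
      transpose_one, Matrix.one_mul, mul_nonsing_inv _ hBu]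
  let g := toEuclideanLin C
  have hgdet : LinearMap.det g = C.det := by
    simp only [g]
    rw [show toEuclideanLin C = toLpLin 2 2 C from rfl, toLpLin_eq_toLin, LinearMap.det_toLin]
  have hnorm : ∀ x, ‖g x‖ ^ 2 = ∑ k, (∑ i, C k i * x i) * (∑ i, C k i * x i) := by
    intro x
    rw [EuclideanSpace.real_norm_sq_eq]
    refine Finset.sum_congr rfl fun k _ => ?_
    simp only [g, toLpLin_apply, mulVec, dotProduct, sq]
  have hgc : Continuous g := g.continuous_of_finiteDimensional
  have hgi : ∀ φ : EuclideanSpace ℝ (Fin n) → ℝ, Continuous φ → Integrable φ (volume[|L]) :=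
    fun φ hφ => Integrable.smul_measure (hφ.continuousOn.integrableOn_compact hL) (by simp [hL0])
  have hmean : ∫ x, ‖g x‖ ^ 2 ∂(volume[|L]) = n := by
    simp only [hnorm]
    rw [integral_finsetSum _ fun k _ => hgi _ (by fun_prop)]
    have : ∀ k, ∫ x : EuclideanSpace ℝ (Fin n), (∑ i, C k i * x i) * (∑ i, C k i * x i)
        ∂(volume[|L]) = (C * M * Cᵀ) k k := by
      intro k
      rw [← momentMatrix_dotProduct _ hi, ← hM]
      rw [Matrix.mul_assoc, Matrix.mul_apply]
      simp only [dotProduct, mulVec, Matrix.mul_apply, transpose_apply]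
    simp [this, hCM]
  have hVpos : 0 < volume.real L := ENNReal.toReal_pos hL0 hL.measure_lt_top.ne
  -- Jensen's inequality for the exponential, in the form of its tangent line at the mean
  have hlow : Real.exp (-(n / 2 : ℝ)) ≤ ∫ x, Real.exp (-(1 / 2) * ‖g x‖ ^ 2) ∂(volume[|L]) := by
    have h1 : ∫ x, Real.exp (-(n / 2 : ℝ)) * (1 + (n / 2 - 1 / 2 * ‖g x‖ ^ 2)) ∂(volume[|L])
        ≤ ∫ x, Real.exp (-(1 / 2) * ‖g x‖ ^ 2) ∂(volume[|L]) := by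
      refine integral_mono (hgi _ (by fun_prop)) (hgi _ (by fun_prop)) fun x => ?_
      have := Real.add_one_le_exp (n / 2 - 1 / 2 * ‖g x‖ ^ 2 : ℝ)
      calc _ ≤ Real.exp (-(n / 2 : ℝ)) * Real.exp (n / 2 - 1 / 2 * ‖g x‖ ^ 2 : ℝ) := by
            gcongr; linarith
        _ = _ := by rw [← Real.exp_add]; ring_nf
    rw [integral_const_mul, integral_add (hgi _ (by fun_prop)) (hgi _ (by fun_prop)),
      integral_sub (hgi _ (by fun_prop)) (hgi _ (by fun_prop)), integral_const_mul, hmean] at h1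
    simp only [integral_const, probReal_univ, one_smul] at h1
    refine le_trans (le_of_eq ?_) h1
    ring
  have hgauss : ∫ x, Real.exp (-(1 / 2) * ‖g x‖ ^ 2) = |B.det| * (2 * Real.pi) ^ (n / 2 : ℝ) := by
    have h1 := GaussianFourier.integral_rexp_neg_mul_sq_norm (V := EuclideanSpace ℝ (Fin n))
      (b := 1 / 2) (by norm_num)
    have hg0 : LinearMap.det g ≠ 0 := by rw [hgdet, hCdet]; exact inv_ne_zero hBdet
    have h2 := integral_map (μ := (volume : Measure (EuclideanSpace ℝ (Fin n)))) (φ := g)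
      hgc.aemeasurable (f := fun y => Real.exp (-(1 / 2) * ‖y‖ ^ 2))
      (by fun_prop)
    rw [Measure.map_linearMap_addHaar_eq_smul_addHaar _ hg0, integral_smul_measure, h1] at h2
    rw [← h2, hgdet, hCdet, inv_inv, ENNReal.toReal_ofReal (abs_nonneg _)]
    simp [mul_comm]
  have hgint : Integrable (fun x => Real.exp (-(1 / 2) * ‖g x‖ ^ 2)) := by
    by_contra h
    rw [integral_undef h] at hgauss
    have : 0 < |B.det| * (2 * Real.pi) ^ (n / 2 : ℝ) := by positivity
    exact this.ne hgauss
  have hup : volume.real L * ∫ x, Real.exp (-(1 / 2) * ‖g x‖ ^ 2) ∂(volume[|L])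
      ≤ |B.det| * (2 * Real.pi) ^ (n / 2 : ℝ) := by
    rw [ProbabilityTheory.cond, integral_smul_measure, ENNReal.toReal_inv, smul_eq_mul,
      ← measureReal_def, mul_inv_cancel_left₀ hVpos.ne', ← hgauss]
    exact setIntegral_le_integral hgint (Filter.Eventually.of_forall fun x => (Real.exp_pos _).le)
  have hfin : volume.real L * Real.exp (-(n / 2 : ℝ))
      ≤ |B.det| * (2 * Real.pi) ^ (n / 2 : ℝ) :=
    (mul_le_mul_of_nonneg_left hlow hVpos.le).trans hup
  have hsq := pow_le_pow_left₀ (by positivity) hfin 2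
  rw [mul_pow, mul_pow, sq_abs, ← hdet, ← Real.exp_nat_mul, ← Real.rpow_mul_natCast (by positivity)]
    at hsq
  have e1 : ((2 : ℕ) : ℝ) * -(n / 2 : ℝ) = -(n : ℝ) := by push_cast; ring
  have e2 : (n / 2 : ℝ) * ((2 : ℕ) : ℝ) = n := by push_cast; ring
  rw [e1, e2, Real.rpow_natCast, Real.exp_neg, ← div_eq_mul_inv, div_le_iff₀ (Real.exp_pos _)]
    at hsq
  refine hsq.trans (le_of_eq ?_)
  rw [mul_pow (2 * Real.pi), ← Real.exp_nat_mul, mul_one]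
  ring

end SecondMoment

/-! ### Centered simplices -/

section Simplex

variable {n : ℕ}

/-- The cross-polytope `∑ |a i| < 1`, of volume `2 ^ n / n!`, is covered by the `2 ^ n` images of the
corner simplex under sign changes. -/
lemma volume_corner_ge :
    1 / (n.factorial : ℝ) ≤ volume.real {a : Fin n → ℝ | (∀ i, 0 ≤ a i) ∧ ∑ i, a i ≤ 1} := by
  set T := {a : Fin n → ℝ | (∀ i, 0 ≤ a i) ∧ ∑ i, a i ≤ 1} with hT
  have hTc : IsClosed T := by
    simp only [hT, Set.ofPred_and, Set.ofPred_forall]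
    exact (isClosed_iInter fun i => isClosed_le (by fun_prop) (by fun_prop)).inter
      (isClosed_le (by fun_prop) (by fun_prop))
  have hTb : volume T ≠ ∞ := by
    have : T ⊆ Set.Icc 0 1 := by
      rintro a ⟨h0, h1⟩
      refine ⟨h0, fun i => le_trans ?_ h1⟩
      exact Finset.single_le_sum (f := a) (fun j _ => h0 j) (Finset.mem_univ i)
    exact ((isCompact_Icc.measure_lt_top).trans_le' (measure_mono this)).ne
  let F : (Fin n → ℤˣ) → (Fin n → ℝ) → (Fin n → ℝ) := fun s a i => ((s i : ℤ) : ℝ) * a i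
  have hF : ∀ s, MeasurePreserving (F s) := by
    intro s
    refine volume_preserving_pi (f := fun i (t : ℝ) => ((s i : ℤ) : ℝ) * t) fun i => ?_
    rcases Int.units_eq_one_or (s i) with h | h
    · simp only [h, Units.val_one, Int.cast_one, one_mul]
      exact MeasurePreserving.id _
    · simpa [h] using Measure.measurePreserving_neg (volume : Measure ℝ)
  have hcov : {a : Fin n → ℝ | ∑ i, |a i| ^ (1 : ℝ) < 1} ⊆ ⋃ s, F s ⁻¹' T := by
    intro a ha
    simp only [Real.rpow_one, Set.mem_ofPred_eq] at ha
    refine Set.mem_iUnion.2 ⟨fun i => if 0 ≤ a i then 1 else -1, ?_⟩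
    have h : F (fun i => if 0 ≤ a i then 1 else -1) a = fun i => |a i| := by
      funext i
      by_cases h : 0 ≤ a i
      · simp [F, h, abs_of_nonneg h]
      · simp [F, h, abs_of_neg (not_le.1 h)]
    rw [Set.mem_preimage, h]
    exact ⟨fun i => abs_nonneg _, ha.le⟩
  have hle : volume {a : Fin n → ℝ | ∑ i, |a i| ^ (1 : ℝ) < 1} ≤ 2 ^ n * volume T := by
    refine (measure_mono hcov).trans ((measure_iUnion_fintype_le _ _).trans (le_of_eq ?_))
    simp only [fun s => (hF s).measure_preimage hTc.measurableSet.nullMeasurableSet]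
    simp
  rw [MeasureTheory.volume_sum_rpow_lt_one (Fin n) le_rfl] at hle
  have h2 := ENNReal.toReal_mono (by finiteness) hle
  rw [ENNReal.toReal_ofReal (by positivity)] at h2
  simp only [Fintype.card_fin, div_one, ENNReal.toReal_mul, ENNReal.toReal_pow,
    ENNReal.toReal_ofNat, Real.Gamma_nat_eq_factorial, one_add_one_eq_two, Real.Gamma_two,
    mul_one] at h2
  rw [measureReal_def]
  rw [div_eq_mul_one_div] at h2
  exact le_of_mul_le_mul_left h2 (by positivity)

/-- A compact convex set containing `0` and the columns `w i` contains the linear image of the corner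
simplex spanned by them. -/
lemma volume_simplex_ge {S : Set (EuclideanSpace ℝ (Fin n))} (hS : Convex ℝ S)
    (hSc : IsCompact S) (h0 : (0 : EuclideanSpace ℝ (Fin n)) ∈ S)
    (w : Fin n → EuclideanSpace ℝ (Fin n)) (hw : ∀ i, w i ∈ S) :
    |(Matrix.of fun i j => w j i).det| / n.factorial ≤ volume.real S := by
  set A : Matrix (Fin n) (Fin n) ℝ := Matrix.of fun i j => w j i with hA
  set T := {a : Fin n → ℝ | (∀ i, 0 ≤ a i) ∧ ∑ i, a i ≤ 1} with hT
  have hTc : IsClosed T := by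
    simp only [hT, Set.ofPred_and, Set.ofPred_forall]
    exact (isClosed_iInter fun i => isClosed_le (by fun_prop) (by fun_prop)).inter
      (isClosed_le (by fun_prop) (by fun_prop))
  let g := Matrix.toLin' A
  have hsub : g '' T ⊆ WithLp.toLp 2 ⁻¹' S := by
    rintro _ ⟨a, ⟨ha0, ha1⟩, rfl⟩
    have : WithLp.toLp 2 (g a) = ∑ i, a i • w i := by
      ext k
      simp [g, hA, Matrix.mulVec, dotProduct, mul_comm]
    rw [Set.mem_preimage, this]
    have := hS.sum_mem (t := Finset.univ) (w := fun o : Option (Fin n) => o.elim (1 - ∑ i, a i) a)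
      (z := fun o => o.elim 0 w) (by rintro (_ | i) -; exacts [sub_nonneg.2 ha1, ha0 i])
      (by simp [Fintype.sum_option]) (by rintro (_ | i) -; exacts [h0, hw i])
    simpa [Fintype.sum_option] using this
  have hvol : volume (WithLp.toLp 2 ⁻¹' S) = volume S :=
    (PiLp.volume_preserving_toLp (Fin n)).measure_preimage hSc.measurableSet.nullMeasurableSet
  have h1 := measure_mono (μ := volume) hsub
  rw [hvol, Measure.addHaar_image_linearMap] at h1
  have h2 := ENNReal.toReal_mono hSc.measure_lt_top.ne h1
  rw [ENNReal.toReal_mul, ENNReal.toReal_ofReal (abs_nonneg _), LinearMap.det_toLin'] at h2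
  refine le_trans ?_ h2
  rw [div_eq_mul_one_div]
  exact mul_le_mul_of_nonneg_left volume_corner_ge (abs_nonneg _)

/-- Affinely dependent vertices lie in a proper affine subspace, which is null. -/
lemma affineIndependent_of_volume_ne_zero {v : Fin (n + 1) → EuclideanSpace ℝ (Fin n)}
    (h : volume (convexHull ℝ (Set.range v)) ≠ 0) : AffineIndependent ℝ v := by
  have htop : affineSpan ℝ (Set.range v) = ⊤ := by
    by_contra hne
    exact h (measure_mono_null (convexHull_subset_affineSpan _)
      (Measure.addHaar_affineSubspace _ _ hne))
  rw [affineIndependent_iff_finrank_vectorSpan_eq ℝ v (n := n) (by simp),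
    ← direction_affineSpan, htop]
  rw [AffineSubspace.direction_top, finrank_top, finrank_euclideanSpace_fin]

open scoped Fin.NatCast Fin.CommRing in
/-- If the vertices of a simplex sum to zero, its center of mass is the origin. The linear map `g`
permuting the vertices cyclically preserves the simplex and its volume, so it fixes the integral; the
sum of the powers `g ^ k`, `0 ≤ k ≤ n`, is zero, so the only fixed point of `g` is `0`. -/
lemma setIntegral_simplex_eq_zero {v : Fin (n + 1) → EuclideanSpace ℝ (Fin n)}
    (hv : LinearIndependent ℝ fun i : Fin n => v i.castSucc) (hsum : ∑ i, v i = 0)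
    (h : volume (convexHull ℝ (Set.range v)) ≠ 0) :
    ∫ x in convexHull ℝ (Set.range v), x = 0 := by
  set S := convexHull ℝ (Set.range v) with hS
  have hSc : IsCompact S := (Set.finite_range v).isCompact_convexHull ℝ
  let b := basisOfLinearIndependentOfCardEqFinrank' _ hv (by simp)
  have hb : ∀ i, b i = v i.castSucc := fun i => by simp [b]
  let g : EuclideanSpace ℝ (Fin n) →ₗ[ℝ] EuclideanSpace ℝ (Fin n) :=
    b.constr ℝ fun i => v i.succ
  have hg1 : ∀ i : Fin n, g (v i.castSucc) = v i.succ := fun i => by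
    rw [← hb, Module.Basis.constr_basis]
  have hg : ∀ i, g (v i) = v (i + 1) := by
    intro i
    induction i using Fin.lastCases with
    | cast i => rw [hg1, Fin.coeSucc_eq_succ]
    | last =>
      have h1 := hsum
      rw [Fin.sum_univ_castSucc] at h1
      have h2 := hsum
      rw [Fin.sum_univ_succ] at h2
      rw [eq_neg_of_add_eq_zero_right h1, map_neg, map_sum, Fin.last_add_one]
      simp only [hg1]
      exact (eq_neg_of_add_eq_zero_left h2).symm
  have hgS : g '' S = S := by
    rw [hS, g.image_convexHull, ← Set.range_comp]
    congr 1
    have : g ∘ v = v ∘ (Equiv.addRight (1 : Fin (n + 1))) := funext hg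
    rw [this, EquivLike.range_comp]
  have hdet : |LinearMap.det g| = 1 := by
    have h1 := Measure.addHaar_image_linearMap volume g S
    rw [hgS] at h1
    have h2 := congrArg ENNReal.toReal h1
    rw [ENNReal.toReal_mul, ENNReal.toReal_ofReal (abs_nonneg _)] at h2
    have h3 : 0 < (volume S).toReal := ENNReal.toReal_pos h hSc.measure_lt_top.ne
    exact (mul_eq_right₀ h3.ne').1 h2.symm
  have hinj : Function.Injective g := by
    have : LinearMap.det g ≠ 0 := by intro h0; simp [h0] at hdet
    exact (LinearMap.equivOfDetNeZero g this).injective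
  let G := LinearMap.toContinuousLinearMap g
  have hfix : g (∫ x in S, x) = ∫ x in S, x := by
    have h1 := integral_image_eq_integral_abs_det_fderiv_smul volume hSc.measurableSet
      (f := g) (f' := fun _ => G) (fun x _ => G.hasFDerivAt.hasFDerivWithinAt) hinj.injOn
      (fun x => x)
    have hG : G.det = LinearMap.det g := by simp [G, ContinuousLinearMap.det]
    rw [hgS] at h1
    simp only [hG, hdet, one_smul] at h1
    refine Eq.trans ?_ h1.symm
    have hI : Integrable (fun x => x) (volume.restrict S) :=
      continuous_id.continuousOn.integrableOn_compact hSc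
    exact (G.integral_comp_comm hI).symm
  -- the orbit sum of `g` vanishes on every vertex, hence everywhere
  have hpow : ∀ (k : ℕ) i, (g ^ k) (v i) = v (i + (k : Fin (n + 1))) := by
    intro k
    induction k with
    | zero => intro i; simp
    | succ k ih => intro i; rw [pow_succ', Module.End.mul_apply, ih, hg, Nat.cast_succ, add_assoc]
  have horb : ∑ k : Fin (n + 1), g ^ (k : ℕ) = 0 := by
    refine b.ext fun i => ?_
    rw [hb, LinearMap.sum_apply]
    simp only [hpow, Fin.cast_val_eq_self, LinearMap.zero_apply]
    rw [← hsum]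
    exact Equiv.sum_comp (Equiv.addLeft i.castSucc) v
  have hfixk : ∀ k : ℕ, (g ^ k) (∫ x in S, x) = ∫ x in S, x := by
    intro k
    induction k with
    | zero => simp
    | succ k ih => rw [pow_succ, Module.End.mul_apply, hfix, ih]
  have h1 := congrArg (fun f : EuclideanSpace ℝ (Fin n) →ₗ[ℝ] EuclideanSpace ℝ (Fin n) =>
    f (∫ x in S, x)) horb
  simp only [LinearMap.sum_apply, hfixk, LinearMap.zero_apply, Finset.sum_const,
    Finset.card_univ, Fintype.card_fin] at h1
  rw [← Nat.cast_smul_eq_nsmul ℝ] at h1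
  exact (smul_eq_zero.1 h1).resolve_left (by positivity)

/-- The simplex with vertices `(x_{i+1} - x_i) / 2`, where `x` is extended by `0` at both ends, lies
in `K` and is centered at the origin. -/
lemma exists_centered_simplex {K : Set (EuclideanSpace ℝ (Fin n))} (hn : 0 < n) (hK : Convex ℝ K)
    (x : Fin n → EuclideanSpace ℝ (Fin n)) (hx : ∀ i, x i ∈ K) (hx' : ∀ i, -x i ∈ K)
    (hdet : (Matrix.of fun i j => x j i).det ≠ 0) :
    ∃ S : Set (EuclideanSpace ℝ (Fin n)), IsSimplex S ∧ S ⊆ K ∧ barycenter S = 0 ∧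
      |(Matrix.of fun i j => x j i).det| / (2 ^ n * n.factorial) ≤ volume.real S := by
  obtain ⟨m, rfl⟩ : ∃ m, n = m + 1 := ⟨n - 1, by omega⟩
  -- `X k` is the `k`-th point counted from `1`, with `X 0 = X (m + 2) = 0`
  let X : ℕ → EuclideanSpace ℝ (Fin (m + 1)) := fun k =>
    if h : 0 < k ∧ k ≤ m + 1 then x ⟨k - 1, by omega⟩ else 0
  have hK0 : (0 : EuclideanSpace ℝ (Fin (m + 1))) ∈ K := by
    have := hK (hx 0) (hx' 0) (a := 1 / 2) (b := 1 / 2) (by norm_num) (by norm_num) (by norm_num)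
    simpa using this
  have hX : ∀ k, X k ∈ K ∧ -X k ∈ K := by
    intro k
    simp only [X]
    split_ifs
    · exact ⟨hx _, hx' _⟩
    · simpa using hK0
  let v : Fin (m + 1 + 1) → EuclideanSpace ℝ (Fin (m + 1)) := fun i =>
    (1 / 2 : ℝ) • (X (i + 1) - X i)
  have hvK : ∀ i, v i ∈ K := by
    intro i
    have := hK (hX (i + 1)).1 (hX i).2 (a := 1 / 2) (b := 1 / 2) (by norm_num) (by norm_num)
      (by norm_num)
    simpa [v, smul_sub, sub_eq_add_neg] using this
  have hsum : ∑ i, v i = 0 := by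
    simp only [v]
    rw [← Finset.smul_sum, Fin.sum_univ_eq_sum_range (fun i => X (i + 1) - X i),
      Finset.sum_range_sub]
    simp [X]
  set S := convexHull ℝ (Set.range v) with hS
  have hSc : IsCompact S := (Set.finite_range v).isCompact_convexHull ℝ
  have hS0 : (0 : EuclideanSpace ℝ (Fin (m + 1))) ∈ S := by
    have := (convex_convexHull ℝ (Set.range v)).sum_mem (t := Finset.univ)
      (w := fun _ : Fin (m + 1 + 1) => (m + 1 + 1 : ℝ)⁻¹) (z := v)
      (fun _ _ => by positivity)
      (by simp; field_simp)
      (fun i _ => subset_convexHull ℝ _ ⟨i, rfl⟩)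
    rwa [← Finset.smul_sum, hsum, smul_zero] at this
  -- subtracting consecutive columns does not change the determinant
  have hVdet : (Matrix.of fun i j => v (Fin.castSucc j) i).det
      = (1 / 2) ^ (m + 1) * (Matrix.of fun i j => x j i).det := by
    rw [← Matrix.det_transpose, ← Matrix.det_transpose (Matrix.of fun i j => x j i)]
    have h1 : (Matrix.of fun i j => v (Fin.castSucc j) i).transpose
        = (1 / 2 : ℝ) • (Matrix.of fun (i j : Fin (m + 1)) => (X (i + 1) - X i) j) := by
      ext i j
      simp [v]
    rw [h1, Matrix.det_smul, Fintype.card_fin]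
    congr 1
    symm
    refine Matrix.det_eq_of_forall_row_eq_smul_add_pred (fun _ => 1) ?_ ?_
    · intro j
      simp [X]
    · intro i j
      simp [X, Fin.castSucc, Fin.castAdd, Fin.castLE]
  have hV0 : (Matrix.of fun i j => v (Fin.castSucc j) i).det ≠ 0 := by
    rw [hVdet]; exact mul_ne_zero (by positivity) hdet
  have hvol : |(Matrix.of fun i j => x j i).det| / (2 ^ (m + 1) * (m + 1).factorial)
      ≤ volume.real S := by
    have := volume_simplex_ge (convex_convexHull ℝ (Set.range v)) hSc hS0
      (fun i : Fin (m + 1) => v i.castSucc) fun i => subset_convexHull ℝ _ ⟨_, rfl⟩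
    rw [hVdet, abs_mul, abs_of_nonneg (by positivity)] at this
    refine le_trans (le_of_eq ?_) this
    rw [one_div, inv_pow]
    field_simp
  have hvol0 : volume S ≠ 0 := by
    intro h0
    rw [measureReal_def, h0, ENNReal.toReal_zero] at hvol
    have : 0 < |(Matrix.of fun i j => x j i).det| / (2 ^ (m + 1) * (m + 1).factorial) := by
      positivity
    linarith
  have hlin : LinearIndependent ℝ fun i : Fin (m + 1) => v i.castSucc := by
    have h1 := Matrix.linearIndependent_cols_of_det_ne_zero hV0
    exact LinearIndependent.of_comp (WithLp.linearEquiv 2 ℝ (Fin (m + 1) → ℝ)).toLinearMap h1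
  refine ⟨S, ⟨v, affineIndependent_of_volume_ne_zero hvol0, rfl⟩,
    convexHull_min (Set.range_subset_iff.2 hvK) hK, ?_, hvol⟩
  rw [barycenter, setIntegral_simplex_eq_zero hlin hsum hvol0, smul_zero]

end Simplex

/-! ### Combining the estimates -/

section Assembly

open ProbabilityTheory

/-- The quantitative form of the theorem, with squared volumes and the factor `(32 π e) ^ n * n!`. -/
lemma exists_simplex_sq_volume_ge {n : ℕ} (hn : 0 < n) {K : Set (EuclideanSpace ℝ (Fin n))}
    (hK : IsCompact K) (hc : Convex ℝ K) (hint : (interior K).Nonempty)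
    (hbar : barycenter K = 0) :
    ∃ S : Set (EuclideanSpace ℝ (Fin n)), IsSimplex S ∧ S ⊆ K ∧ barycenter S = 0 ∧
      volume.real K ^ 2 ≤
        ((16 * (2 * Real.pi * Real.exp 1)) ^ n * n.factorial) * volume.real S ^ 2 := by
  have hV : 0 < volume.real K :=
    ENNReal.toReal_pos ((isOpen_interior.measure_pos volume hint).trans_le
      (measure_mono interior_subset)).ne' hK.measure_lt_top.ne
  have hbar' : ∫ x in K, x = 0 :=
    (smul_eq_zero.1 hbar).resolve_left (inv_ne_zero hV.ne')
  set L := {x | x ∈ K ∧ -x ∈ K} with hL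
  have hLc : IsCompact L := hK.inter_right (hK.isClosed.preimage continuous_neg)
  have hVL : volume.real K ≤ 2 ^ n * volume.real L := milman_pajor hK hc hint hbar'
  have hW : 0 < volume.real L := by
    by_contra h
    have : 2 ^ n * volume.real L ≤ 0 := mul_nonpos_of_nonneg_of_nonpos (by positivity) (not_lt.1 h)
    linarith
  have hL0 : volume L ≠ 0 := fun h => by simp [measureReal_def, h] at hW
  have hprob : IsProbabilityMeasure (volume[|L]) :=
    cond_isProbabilityMeasure_of_finite hL0 hLc.measure_lt_top.ne
  obtain ⟨x, hx, hdet⟩ := exists_det_sq_ge (volume[|L]) (ae_cond_mem hLc.measurableSet)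
    (integrable_coord_mul hLc hL0)
  have hWM := volume_sq_le_det hLc hL0
  have hMpos := (momentMatrix_posDef hLc hL0).det_pos
  set M := (momentMatrix (volume[|L])).det
  set D := (Matrix.of fun i j => x j i).det
  have hD : D ≠ 0 := by
    intro h
    rw [h] at hdet
    have : 0 < n.factorial * M := by positivity
    simp at hdet
    linarith
  obtain ⟨S, hS, hSK, hSb, hSv⟩ := exists_centered_simplex hn hc x (fun i => (hx i).1)
    (fun i => (hx i).2) hD
  refine ⟨S, hS, hSK, hSb, ?_⟩
  set P := 2 * Real.pi * Real.exp 1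
  have hP : 0 < P := by positivity
  have hf : (0 : ℝ) < n.factorial := by positivity
  rw [div_le_iff₀ (by positivity)] at hSv
  have hD2 : D ^ 2 ≤ (volume.real S * (2 ^ n * n.factorial)) ^ 2 := by
    rw [← sq_abs]; gcongr
  have hM2 : M ≤ n.factorial * (2 ^ n) ^ 2 * volume.real S ^ 2 := by
    refine le_of_mul_le_mul_left ?_ hf
    calc _ ≤ _ := hdet.trans hD2
      _ = _ := by ring
  have h16 : (16 : ℝ) ^ n = (2 ^ n) ^ 4 := by rw [← pow_mul, mul_comm, pow_mul]; norm_num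
  calc volume.real K ^ 2 ≤ (2 ^ n * volume.real L) ^ 2 := by gcongr
    _ = (2 ^ n) ^ 2 * volume.real L ^ 2 := by ring
    _ ≤ (2 ^ n) ^ 2 * (P ^ n * (n.factorial * (2 ^ n) ^ 2 * volume.real S ^ 2)) := by
        gcongr
        exact hWM.trans (by gcongr)
    _ = _ := by
        rw [mul_pow 16 P, h16]
        ring

end Assembly

end CenteredSimplex

/-- Every convex body with barycenter at the origin contains a simplex with barycenter
at the origin whose volume ratio is at least `c/√n` for an absolute constant `c > 0`. -/
theorem exists_large_centered_simplex :
    ∃ c : ℝ, 0 < c ∧ ∀ (n : ℕ), 0 < n → ∀ K : Set (EuclideanSpace ℝ (Fin n)),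
      IsCompact K → Convex ℝ K → (interior K).Nonempty → barycenter K = 0 →
      ∃ S : Set (EuclideanSpace ℝ (Fin n)), IsSimplex S ∧ S ⊆ K ∧ barycenter S = 0 ∧
        ((volume S).toReal / (volume K).toReal) ^ ((1 : ℝ) / n) ≥ c / Real.sqrt n := by
  set Q : ℝ := 16 * (2 * Real.pi * Real.exp 1) with hQ
  have hQ0 : 0 < Q := by positivity
  refine ⟨1 / √Q, by positivity, fun n hn K hK hc hint hbar => ?_⟩
  obtain ⟨S, hS, hSK, hSb, hSv⟩ := exists_simplex_sq_volume_ge hn hK hc hint hbar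
  rw [← hQ] at hSv
  refine ⟨S, hS, hSK, hSb, ?_⟩
  change (volume.real S / volume.real K) ^ ((1 : ℝ) / n) ≥ 1 / √Q / √n
  have hV : 0 < volume.real K :=
    ENNReal.toReal_pos ((isOpen_interior.measure_pos volume hint).trans_le
      (measure_mono interior_subset)).ne' hK.measure_lt_top.ne
  have hn' : (0 : ℝ) < n := by exact_mod_cast hn
  have hfact : (n.factorial : ℝ) ≤ (n : ℝ) ^ n := by exact_mod_cast n.factorial_le_pow
  have hkey : (1 / √Q / √n) ^ n ≤ volume.real S / volume.real K := by
    have hsq : (1 / √Q / √n) ^ 2 = 1 / (Q * n) := by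
      rw [div_pow, div_pow, Real.sq_sqrt hQ0.le, Real.sq_sqrt hn'.le, one_pow, div_div]
    refine le_of_sq_le_sq ?_ (by positivity)
    rw [← pow_mul, mul_comm n 2, pow_mul, hsq, div_pow, div_pow, le_div_iff₀ (by positivity),
      one_pow, one_div_mul_eq_div, div_le_iff₀ (by positivity)]
    calc _ ≤ _ := hSv
      _ ≤ (Q ^ n * n ^ n) * volume.real S ^ 2 := by gcongr
      _ = _ := by rw [mul_pow Q]; ring
  calc 1 / √Q / √n = ((1 / √Q / √n) ^ n) ^ ((1 : ℝ) / n) := by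
        rw [one_div (n : ℝ), Real.pow_rpow_inv_natCast (by positivity) hn.ne']
    _ ≤ _ := by gcongr
end

section
/- For every convex body K ⊂ R^n, the simplex S_min(K) of minimal volume containing K satisfies (vol(S_min(K))/vol(K))^{1/n} ≤ d√n for an absolute constant d > 0. -/
/-!
The minimal simplex is no larger than any simplex `T ⊇ K`, so it suffices to construct one with
`vol T ≤ (2 e² √n) ^ n * vol K` (`exists_simplex_volume_le`).

Both sides scale alike under affine maps, so `K` may be assumed to be in John's position: the unit
ball is an ellipsoid of maximal volume in `K`. Then there are contact points `u a`, with
`‖u a‖ = 1` and `⟪u a, x⟫ ≤ 1` on `K`, and a probability `p` on them with mean `0` and second moment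
matrix `I / n` (`exists_john_decomposition`). Draw `n` of these points independently. The product of
the slacks `s k x = 1 - ⟪u (I k), x⟫` has expectation `1` at each `x`, whereas the determinant `D` of
the chosen vectors satisfies `E |D| ≥ E D² = n! / n ^ n ≥ e ^ (-n)`. Hence some choice satisfies
`∫_K ∏ s k ≤ e ^ n |D| vol K` (`exists_selection`).

The `n` chosen half-spaces `s k ≥ 0` give `n` facets. The last facet comes from a maximizer `z` of
`∏ s k` on `K`: with `r k = s k z`, the first-order condition is `∑ s k / r k ≤ n` on `K`, and
convexity gives `∏ r k * vol K ≤ 4 ^ n ∫_K ∏ s k` (`exists_product_maximizer`). The resulting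
simplex is an affine image of `{y ≥ 0, ∑ y k ≤ n}`, of volume at most `e ^ n`, so its own volume is at
most `e ^ n * ∏ r k / |D| ≤ (4 e²) ^ n` (`exists_enclosing_simplex`). Since `K` contains the unit ball,
which contains a cube of side `2 / √n`, its volume is at least `(2 / √n) ^ n`, and the bound follows.
-/

open MeasureTheory

/-! ### Compact convex hulls and separation by unit vectors -/

/-- By Carathéodory, the convex hull is the image of the compact set
`stdSimplex × s^(dim V + 1)` under `(w, z) ↦ ∑ i, w i • z i`. -/
theorem isCompact_convexHull_of_isCompact {V : Type*} [NormedAddCommGroup V] [NormedSpace ℝ V]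
    [FiniteDimensional ℝ V] {s : Set V} (hs : IsCompact s) : IsCompact (convexHull ℝ s) := by
  rcases s.eq_empty_or_nonempty with rfl | ⟨z₀, hz₀⟩
  · simp
  set d := Module.finrank ℝ V + 1
  have hcomp : IsCompact ((fun q : (Fin d → ℝ) × (Fin d → V) => ∑ i, q.1 i • q.2 i) ''
      (stdSimplex ℝ (Fin d) ×ˢ Set.univ.pi fun _ => s)) :=
    ((isCompact_stdSimplex ℝ (Fin d)).prod (isCompact_univ_pi fun _ => hs)).image (by fun_prop)
  convert hcomp using 1
  apply Set.Subset.antisymm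
  · intro x hx
    obtain ⟨ι, _, z, w, hz, hind, hw, hw1, hx⟩ := eq_pos_convex_span_of_mem_convexHull hx
    have hcard : Fintype.card ι ≤ Fintype.card (Fin d) := by
      rw [Fintype.card_fin]
      exact hind.card_le_finrank_succ.trans (Nat.add_le_add_right (Submodule.finrank_le _) 1)
    obtain ⟨e⟩ := Function.Embedding.nonempty_of_card_le hcard
    refine ⟨(Function.extend e w 0, Function.extend e z fun _ => z₀), ⟨⟨?_, ?_⟩, ?_⟩, ?_⟩
    · intro i
      by_cases h : ∃ a, e a = i
      · obtain ⟨a, rfl⟩ := h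
        simpa [e.injective.extend_apply] using (hw a).le
      · simp [Function.extend_apply' _ _ _ h]
    · rw [← hw1, ← Finset.sum_subset (Finset.subset_univ (Finset.univ.map e)), Finset.sum_map]
      · simp [e.injective.extend_apply]
      · intro i _ hi
        simp only; rw [Function.extend_apply' _ _ _ (by simpa using hi)]; rfl
    · intro i _
      by_cases h : ∃ a, e a = i
      · obtain ⟨a, rfl⟩ := h
        simpa [e.injective.extend_apply] using hz ⟨a, rfl⟩
      · simpa [Function.extend_apply' _ _ _ h] using hz₀
    · simp only
      rw [← hx, ← Finset.sum_subset (Finset.subset_univ (Finset.univ.map e)), Finset.sum_map]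
      · simp [e.injective.extend_apply]
      · intro i _ hi
        rw [Function.extend_apply' _ _ _ (by simpa using hi)]; simp
  · rintro _ ⟨⟨w, z⟩, ⟨hw, hz⟩, rfl⟩
    exact (convex_convexHull ℝ s).sum_mem (fun i _ => hw.1 i) hw.2
      fun i _ => subset_convexHull ℝ s (hz i trivial)

/-- Strict separation of a point from a closed convex set by a functional that is represented by a
unit vector, so that limits of such functionals stay nonzero. -/
theorem exists_unit_separating {V : Type*} [NormedAddCommGroup V] [InnerProductSpace ℝ V]
    [CompleteSpace V] {K : Set V} (hc : Convex ℝ K) (hcl : IsClosed K) (hne : K.Nonempty) {z : V}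
    (hz : z ∉ K) : ∃ θ : V, ‖θ‖ = 1 ∧ ∀ x ∈ K, inner ℝ θ x < inner ℝ θ z := by
  obtain ⟨f, c, hf, hfz⟩ := geometric_hahn_banach_closed_point hc hcl hz
  set η := (InnerProductSpace.toDual ℝ V).symm f with hη
  have hin (x : V) : inner ℝ η x = f x := by simp [hη]
  have hη0 : η ≠ 0 := by
    intro h0
    obtain ⟨x, hx⟩ := hne
    have := (hf x hx).trans hfz
    rw [← hin, ← hin, h0] at this
    simp at this
  refine ⟨‖η‖⁻¹ • η, norm_smul_inv_norm (𝕜 := ℝ) hη0, fun x hx => ?_⟩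
  simp only [real_inner_smul_left, hin]
  have := norm_pos_iff.2 hη0
  have := (hf x hx).trans hfz
  gcongr

/-! ### John's position -/

/-- The first-order expansion `det (1 + t H) = 1 + t tr H + O(t²)`: a direction of positive trace
strictly increases the determinant. -/
theorem exists_det_one_add_smul_gt {n : ℕ} (H : Matrix (Fin n) (Fin n) ℝ) (hH : 0 < H.trace) :
    ∃ ε > (0 : ℝ), ∀ t : ℝ, 0 < t → t < ε → 1 < (1 + t • H).det := by
  obtain ⟨q, hq⟩ : ∃ q : Polynomial ℝ, ∀ t, (1 + t • H).det = 1 + H.trace * t + q.eval t * t ^ 2 :=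
    ⟨_, fun t => Matrix.det_one_add_smul t H⟩
  have hcont : Continuous fun t => H.trace + q.eval t * t := by fun_prop
  have h0 : ∀ᶠ t in nhds (0 : ℝ), 0 < H.trace + q.eval t * t :=
    hcont.continuousAt.eventually (lt_mem_nhds (by simpa using hH))
  obtain ⟨ε, hε, h⟩ := Metric.eventually_nhds_iff.1 h0
  refine ⟨ε, hε, fun t ht hte => ?_⟩
  have := h (y := t) (by simpa [abs_of_pos ht] using hte)
  rw [hq]
  nlinarith

theorem det_toEuclideanCLM {n : ℕ} (M : Matrix (Fin n) (Fin n) ℝ) :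
    (Matrix.toEuclideanCLM (n := Fin n) (𝕜 := ℝ) M).det = M.det := by
  rw [ContinuousLinearMap.det, Matrix.coe_toEuclideanCLM_eq_toEuclideanLin,
    Matrix.toEuclideanLin, Matrix.toLpLin_eq_toLin, LinearMap.det_toLin]

open Topology Filter Metric in
/-- First-order variation at the maximal ellipsoid. The hypothesis `hmax` says that the unit ball has
maximal volume among the ellipsoids contained in `K`. If `tr H > 0`, the perturbed ellipsoids
`(1 + t H) B + t w` have larger volume and hence leave `K`; a limit as `t → 0` of unit vectors
separating escaping points from `K` is a contact point `θ` of the ball with the boundary of `K` at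
which the velocity `H θ + w` of the perturbation does not point strictly inwards. -/
theorem exists_contact_point_of_maximal {n : ℕ} {K : Set (EuclideanSpace ℝ (Fin n))}
    (hK : IsCompact K) (hc : Convex ℝ K) (hB : closedBall 0 1 ⊆ K)
    (hmax : ∀ (A : EuclideanSpace ℝ (Fin n) →L[ℝ] EuclideanSpace ℝ (Fin n)) b,
      (∀ y ∈ closedBall (0 : EuclideanSpace ℝ (Fin n)) 1, A y + b ∈ K) → |A.det| ≤ 1)
    (H : Matrix (Fin n) (Fin n) ℝ) (hH : 0 < H.trace) (w : EuclideanSpace ℝ (Fin n)) :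
    ∃ θ : EuclideanSpace ℝ (Fin n), ‖θ‖ = 1 ∧ (∀ x ∈ K, inner ℝ θ x ≤ 1) ∧
      0 ≤ inner ℝ θ (Matrix.toEuclideanCLM (n := Fin n) (𝕜 := ℝ) H θ + w) := by
  obtain ⟨ε, hε, hdet⟩ := exists_det_one_add_smul_gt H hH
  set L := Matrix.toEuclideanCLM (n := Fin n) (𝕜 := ℝ) H with hL
  set t : ℕ → ℝ := fun k => ε / (k + 2) with ht
  have ht0 (k : ℕ) : 0 < t k := by positivity
  have htε (k : ℕ) : t k < ε := by
    rw [ht]; exact div_lt_self hε (by have := k.cast_nonneg (α := ℝ); linarith)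
  have htlim : Tendsto t atTop (𝓝 0) := by
    have := (tendsto_const_div_atTop_nhds_zero_nat ε).comp (tendsto_add_atTop_nat 2)
    refine this.congr fun k => ?_
    simp [ht]
  -- The dilated ellipsoids `(1 + t H) B + t w` leave `K`; separate an escaping point from `K`.
  have hstep (k : ℕ) : ∃ q : EuclideanSpace ℝ (Fin n) × EuclideanSpace ℝ (Fin n),
      q ∈ sphere 0 1 ×ˢ closedBall 0 1 ∧
        ∀ x ∈ K, inner ℝ q.1 x < inner ℝ q.1 (q.2 + t k • (L q.2 + w)) := by
    by_contra! hcon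
    have hle := hmax (Matrix.toEuclideanCLM (n := Fin n) (𝕜 := ℝ) (1 + t k • H)) (t k • w) ?_
    · rw [det_toEuclideanCLM] at hle
      exact absurd ((le_abs_self _).trans hle) (hdet _ (ht0 k) (htε k)).not_ge
    · intro y hy
      by_contra hout
      obtain ⟨θ, hθ, hsep⟩ := exists_unit_separating hc hK.isClosed ⟨0, hB (by simp)⟩ hout
      obtain ⟨x, hx, hle⟩ := hcon (θ, y) ⟨by simpa using hθ, hy⟩
      refine absurd (hsep x hx) (not_lt.2 ?_)
      convert hle using 2
      simp [map_add, hL, add_assoc]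
  choose q hq hsep using hstep
  obtain ⟨⟨θ, y⟩, hmem, φ, hφ, hlim⟩ :=
    ((isCompact_sphere 0 1).prod (isCompact_closedBall 0 1)).tendsto_subseq hq
  have hθ : ‖θ‖ = 1 := by simpa using hmem.1
  have hy : ‖y‖ ≤ 1 := by simpa using hmem.2
  have hl1 : Tendsto (fun k => (q (φ k)).1) atTop (𝓝 θ) := (continuous_fst.tendsto _).comp hlim
  have hl2 : Tendsto (fun k => (q (φ k)).2) atTop (𝓝 y) := (continuous_snd.tendsto _).comp hlim
  have hl3 : Tendsto (fun k => t (φ k)) atTop (𝓝 0) := htlim.comp hφ.tendsto_atTop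
  have hl4 : Tendsto (fun k => L (q (φ k)).2 + w) atTop (𝓝 (L y + w)) :=
    ((L.continuous.tendsto _).comp hl2).add_const w
  have hsupp : ∀ x ∈ K, inner ℝ θ x ≤ inner ℝ θ y := by
    intro x hx
    have h1 : Tendsto (fun k => inner ℝ (q (φ k)).1
        ((q (φ k)).2 + t (φ k) • (L (q (φ k)).2 + w))) atTop (𝓝 (inner ℝ θ (y + (0 : ℝ) • (L y + w)))) :=
      hl1.inner (hl2.add (hl3.smul hl4))
    have h2 : Tendsto (fun k => inner ℝ (q (φ k)).1 x) atTop (𝓝 (inner ℝ θ x)) :=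
      hl1.inner tendsto_const_nhds
    simpa using le_of_tendsto_of_tendsto' h2 h1 fun k => (hsep (φ k) x hx).le
  have hθy : θ = y := by
    have h1 : 1 ≤ inner ℝ θ y := by
      simpa [hθ] using hsupp θ (hB (by simp [hθ]))
    have h2 := norm_sub_sq_real θ y
    rw [hθ] at h2
    have h3 : ‖y‖ ^ 2 ≤ 1 := pow_le_one₀ (norm_nonneg _) hy
    have h4 : ‖θ - y‖ ^ 2 ≤ 0 := by linarith
    exact sub_eq_zero.1 (norm_eq_zero.1 (pow_eq_zero_iff two_ne_zero |>.1 (h4.antisymm (sq_nonneg _))))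
  subst hθy
  refine ⟨θ, hθ, fun x hx => (hsupp x hx).trans_eq (by simp [hθ]), ?_⟩
  refine ge_of_tendsto' (hl1.inner hl4) fun k => ?_
  -- Testing the separation against `x = θₖ ∈ K` gives `1 < ⟪θₖ, yₖ⟫ + tₖ ⟪θₖ, H yₖ + w⟫`.
  obtain ⟨hq1, hq2⟩ := hq (φ k)
  have hn1 : ‖(q (φ k)).1‖ = 1 := by simpa using hq1
  have hn2 : ‖(q (φ k)).2‖ ≤ 1 := by simpa using hq2
  have h1 := hsep (φ k) (q (φ k)).1 (hB (by simp [hn1]))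
  rw [inner_add_right, real_inner_smul_right, real_inner_self_eq_norm_sq, hn1] at h1
  have h2 := real_inner_le_norm (q (φ k)).1 (q (φ k)).2
  rw [hn1] at h2
  exact (pos_of_mul_pos_right (a := t (φ k)) (by linarith) (ht0 _).le).le

open Metric in
/-- John's theorem: if the unit ball is a maximal ellipsoid in `K`, there is a probability `p` on
finitely many contact points `u a` with barycentre `0` and second moment matrix `I / n`. Otherwise
`(I / n, 0)` could be separated from the convex hull of the points `(u uᵀ, u)`, and the separating
functional would yield a pair `(H, w)` contradicting `exists_contact_point_of_maximal`. -/
theorem exists_john_decomposition {n : ℕ} (hn : 0 < n) {K : Set (EuclideanSpace ℝ (Fin n))}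
    (hK : IsCompact K) (hc : Convex ℝ K) (hB : closedBall 0 1 ⊆ K)
    (hmax : ∀ (A : EuclideanSpace ℝ (Fin n) →L[ℝ] EuclideanSpace ℝ (Fin n)) b,
      (∀ y ∈ closedBall (0 : EuclideanSpace ℝ (Fin n)) 1, A y + b ∈ K) → |A.det| ≤ 1) :
    ∃ (ι : Type) (_ : Fintype ι) (p : ι → ℝ) (u : ι → EuclideanSpace ℝ (Fin n)),
      (∀ a, 0 ≤ p a) ∧ ∑ a, p a = 1 ∧ (∀ a, ‖u a‖ = 1) ∧ (∀ a, ∀ x ∈ K, inner ℝ (u a) x ≤ 1) ∧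
      ∑ a, p a • u a = 0 ∧
      ∀ i j, ∑ a, p a * (u a i * u a j) = if i = j then (n : ℝ)⁻¹ else 0 := by
  set U : Set (EuclideanSpace ℝ (Fin n)) := {u | ‖u‖ = 1 ∧ ∀ x ∈ K, inner ℝ u x ≤ 1} with hU
  set Φ : EuclideanSpace ℝ (Fin n) → (Fin n → Fin n → ℝ) × EuclideanSpace ℝ (Fin n) :=
    fun u => (fun i j => u i * u j, u) with hΦ
  set τ : (Fin n → Fin n → ℝ) × EuclideanSpace ℝ (Fin n) :=
    (fun i j => if i = j then (n : ℝ)⁻¹ else 0, 0) with hτ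
  have hUc : IsCompact U := by
    refine (isCompact_sphere (0 : EuclideanSpace ℝ (Fin n)) 1).of_isClosed_subset ?_
      fun u hu => by simpa using hu.1
    simp only [hU, Set.ofPred_and, Set.ofPred_forall]
    refine (isClosed_eq continuous_norm continuous_const).inter ?_
    exact isClosed_iInter fun x => isClosed_iInter fun _ =>
      isClosed_le (by fun_prop) continuous_const
  have hmem : τ ∈ convexHull ℝ (Φ '' U) := by
    by_contra hout
    have hΦc : Continuous Φ := by fun_prop
    obtain ⟨f, c, hf, hfτ⟩ := geometric_hahn_banach_closed_point (convex_convexHull ℝ _)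
      (isCompact_convexHull_of_isCompact (hUc.image hΦc)).isClosed hout
    set H₀ : Matrix (Fin n) (Fin n) ℝ := fun i j => f (Pi.single i (Pi.single j 1), 0) with hH₀
    set w : EuclideanSpace ℝ (Fin n) := WithLp.toLp 2 fun j => f (0, EuclideanSpace.single j 1)
      with hw
    have hfM (M : Fin n → Fin n → ℝ) : f (M, 0) = ∑ i, ∑ j, M i j * H₀ i j := by
      have : ((M, 0) : (Fin n → Fin n → ℝ) × EuclideanSpace ℝ (Fin n)) =
          ∑ i, ∑ j, M i j • (Pi.single i (Pi.single j 1), 0) := by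
        ext i j
        · simp [Prod.fst_sum, Finset.sum_apply, Pi.single_apply]
          simp [ite_apply, Pi.single_apply]
        · simp [Prod.snd_sum]
      rw [this]
      simp only [map_sum, map_smul, smul_eq_mul, hH₀]
    have hfv (v : EuclideanSpace ℝ (Fin n)) : f (0, v) = inner ℝ v w := by
      have : ((0, v) : (Fin n → Fin n → ℝ) × EuclideanSpace ℝ (Fin n)) =
          ∑ j, v j • (0, EuclideanSpace.single j 1) := by
        ext i j
        · simp [Prod.fst_sum]
        · simp [Prod.snd_sum]
          simp [Pi.single_apply]
      rw [this]
      simp only [map_sum, map_smul, smul_eq_mul]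
      simp [hw, PiLp.inner_apply, mul_comm]
    have hsplit (M : Fin n → Fin n → ℝ) (v : EuclideanSpace ℝ (Fin n)) :
        f (M, v) = ∑ i, ∑ j, M i j * H₀ i j + inner ℝ v w := by
      rw [← hfM, ← hfv, ← map_add]; simp
    have htr : 0 < (H₀ - c • 1).trace := by
      have h1 : f τ = (n : ℝ)⁻¹ * H₀.trace := by
        rw [hτ, hsplit]
        simp [Matrix.trace, Finset.mul_sum]
      have h2 : (0 : ℝ) < n := by exact_mod_cast hn
      rw [h1, inv_mul_eq_div, lt_div_iff₀ h2] at hfτ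
      simp [Matrix.trace_sub, Matrix.trace_smul]
      linarith
    obtain ⟨θ, hθ, hθK, hpos⟩ := exists_contact_point_of_maximal hK hc hB hmax _ htr w
    have h1 : f (Φ θ) < c := hf _ (subset_convexHull ℝ _ ⟨θ, ⟨hθ, hθK⟩, rfl⟩)
    rw [hΦ, hsplit] at h1
    have h2 : inner ℝ θ (Matrix.toEuclideanCLM (n := Fin n) (𝕜 := ℝ) H₀ θ) =
        ∑ i, ∑ j, θ i * θ j * H₀ i j := by
      simp [PiLp.inner_apply, Matrix.ofLp_toEuclideanCLM, Matrix.mulVec, dotProduct,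
        Finset.sum_mul]
      exact Finset.sum_congr rfl fun i _ => Finset.sum_congr rfl fun j _ => by ring
    rw [map_sub, map_smul, map_one, inner_add_right, sub_apply, inner_sub_right,
      h2] at hpos
    simp [real_inner_smul_right, hθ] at hpos
    linarith
  obtain ⟨ι, _, z, p, hz, -, hp, hp1, hsum⟩ := eq_pos_convex_span_of_mem_convexHull hmem
  choose u hu huz using fun a => hz ⟨a, rfl⟩
  simp only [← huz, hΦ, hτ, Prod.ext_iff, Prod.fst_sum, Prod.snd_sum, Prod.smul_fst,
    Prod.smul_snd] at hsum
  refine ⟨ι, inferInstance, p, u, fun a => (hp a).le, hp1, fun a => (hu a).1, fun a => (hu a).2,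
    hsum.2, fun i j => ?_⟩
  simpa using congrFun (congrFun hsum.1 i) j

/-! ### Random choice of contact points -/

/-- The second moment of the determinant of `n` independent vectors drawn from a distribution with
second moment matrix `I / n` is `n! / n ^ n`. -/
theorem sum_prod_mul_det_sq {n : ℕ} {ι : Type*} [Fintype ι] (p : ι → ℝ)
    (u : ι → EuclideanSpace ℝ (Fin n))
    (hcov : ∀ i j, ∑ a, p a * (u a i * u a j) = if i = j then (n : ℝ)⁻¹ else 0) :
    ∑ I : Fin n → ι, (∏ k, p (I k)) * (Matrix.of fun k j => u (I k) j).det ^ 2 =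
      n.factorial / (n : ℝ) ^ n := by
  classical
  have hexp (I : Fin n → ι) : (∏ k, p (I k)) * (Matrix.of fun k j => u (I k) j).det ^ 2 =
      ∑ σ : Equiv.Perm (Fin n), ∑ τ : Equiv.Perm (Fin n),
        ((Equiv.Perm.sign σ : ℤ) : ℝ) * ((Equiv.Perm.sign τ : ℤ) : ℝ) *
          ∏ k, p (I k) * (u (I k) (σ k) * u (I k) (τ k)) := by
    rw [← Matrix.det_transpose, Matrix.det_apply', sq, Finset.sum_mul_sum, Finset.mul_sum]
    refine Finset.sum_congr rfl fun σ _ => ?_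
    rw [Finset.mul_sum]
    refine Finset.sum_congr rfl fun τ _ => ?_
    simp only [Finset.prod_mul_distrib, Matrix.transpose_apply, Matrix.of_apply]
    ring
  simp only [hexp]
  rw [Finset.sum_comm]
  have hinner (σ τ : Equiv.Perm (Fin n)) :
      ∑ I : Fin n → ι, ((Equiv.Perm.sign σ : ℤ) : ℝ) * ((Equiv.Perm.sign τ : ℤ) : ℝ) *
          ∏ k, p (I k) * (u (I k) (σ k) * u (I k) (τ k)) =
        if σ = τ then ((n : ℝ) ^ n)⁻¹ else 0 := by
    rw [← Finset.mul_sum, ← Fintype.piFinset_univ,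
      ← Finset.prod_univ_sum (fun _ => Finset.univ) fun k a => p a * (u a (σ k) * u a (τ k))]
    simp only [hcov]
    split_ifs with h
    · subst h
      simp [← Int.cast_mul, ← Units.val_mul]
    · obtain ⟨k, hk⟩ : ∃ k, σ k ≠ τ k := by
        by_contra! hcon
        exact h (Equiv.ext hcon)
      rw [Finset.prod_eq_zero (Finset.mem_univ k) (by simp [hk]), mul_zero]
  have : ∀ σ : Equiv.Perm (Fin n), ∑ I : Fin n → ι, ∑ τ : Equiv.Perm (Fin n),
      ((Equiv.Perm.sign σ : ℤ) : ℝ) * ((Equiv.Perm.sign τ : ℤ) : ℝ) *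
          ∏ k, p (I k) * (u (I k) (σ k) * u (I k) (τ k)) = ((n : ℝ) ^ n)⁻¹ := by
    intro σ
    rw [Finset.sum_comm]
    simp [hinner]
  simp only [this]
  simp [Fintype.card_perm, div_eq_mul_inv]

/-- Hadamard's inequality for unit rows. -/
theorem abs_det_le_one_of_norm_eq_one {n : ℕ} (v : Fin n → EuclideanSpace ℝ (Fin n))
    (hv : ∀ k, ‖v k‖ = 1) : |(Matrix.of fun k j => v k j).det| ≤ 1 := by
  have : Fact (Module.finrank ℝ (EuclideanSpace ℝ (Fin n)) = n) := ⟨by simp⟩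
  set b := EuclideanSpace.basisFun (Fin n) ℝ
  have h := b.toBasis.orientation.abs_volumeForm_apply_le v
  rw [b.toBasis.orientation.volumeForm_robust b rfl, Module.Basis.det_apply] at h
  rw [← Matrix.det_transpose]
  simp only [hv, Finset.prod_const_one] at h
  convert h using 3
  ext j k
  simp [b, Module.Basis.toMatrix_apply]

/-- Choosing the `n` contact points independently with law `p`. The product `∏ k, (1 - ⟪u (I k), x⟫)`
has expectation `1` at every `x`, because the mean of `p` is zero, while `|det|` has expectation at
least that of `det²`, namely `n! / n ^ n ≥ exp (-n)`. Comparing the two expectations gives one choice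
`I` for which the integral over `K` is at most `exp n * |det| * vol K`. -/
theorem exists_selection {n : ℕ} (hn : 0 < n) {ι : Type*} [Fintype ι]
    {K : Set (EuclideanSpace ℝ (Fin n))} (hK : IsCompact K) {p : ι → ℝ}
    {u : ι → EuclideanSpace ℝ (Fin n)} (hp : ∀ a, 0 ≤ p a) (hp1 : ∑ a, p a = 1)
    (hu : ∀ a, ‖u a‖ = 1) (hmean : ∑ a, p a • u a = 0)
    (hcov : ∀ i j, ∑ a, p a * (u a i * u a j) = if i = j then (n : ℝ)⁻¹ else 0) :
    ∃ I : Fin n → ι, ∫ x in K, ∏ k, (1 - inner ℝ (u (I k)) x) ≤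
      Real.exp n * |(Matrix.of fun k j => u (I k) j).det| * volume.real K := by
  classical
  by_contra! hcon
  have hP1 : ∑ I : Fin n → ι, ∏ k, p (I k) = 1 := by
    rw [← Fintype.piFinset_univ, ← Finset.prod_univ_sum (fun _ => Finset.univ) fun _ a => p a]
    simp [hp1]
  have hP0 (I : Fin n → ι) : 0 ≤ ∏ k, p (I k) := Finset.prod_nonneg fun k _ => hp _
  have hint (I : Fin n → ι) :
      IntegrableOn (fun x => (∏ k, p (I k)) * ∏ k, (1 - inner ℝ (u (I k)) x)) K volume :=
    (Continuous.continuousOn (by fun_prop)).integrableOn_compact hK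
  have hleft : ∑ I : Fin n → ι, (∏ k, p (I k)) * ∫ x in K, ∏ k, (1 - inner ℝ (u (I k)) x) =
      volume.real K := by
    simp only [← integral_const_mul]
    rw [← integral_finsetSum _ fun I _ => hint I]
    have (x : EuclideanSpace ℝ (Fin n)) :
        ∑ I : Fin n → ι, (∏ k, p (I k)) * ∏ k, (1 - inner ℝ (u (I k)) x) = 1 := by
      simp only [← Finset.prod_mul_distrib]
      rw [← Fintype.piFinset_univ, ← Finset.prod_univ_sum (fun _ => Finset.univ)
        fun _ a => p a * (1 - inner ℝ (u a) x)]
      have h0 : ∑ a, p a * inner ℝ (u a) x = 0 := by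
        have := congrArg (fun v => inner ℝ v x) hmean
        simpa [sum_inner, real_inner_smul_left] using this
      simp [mul_sub, Finset.sum_sub_distrib, hp1, h0]
    simp [this, Measure.real]
  have hdet : 1 ≤ Real.exp n *
      ∑ I : Fin n → ι, (∏ k, p (I k)) * |(Matrix.of fun k j => u (I k) j).det| := by
    have h1 : (n.factorial : ℝ) / n ^ n ≤
        ∑ I : Fin n → ι, (∏ k, p (I k)) * |(Matrix.of fun k j => u (I k) j).det| := by
      rw [← sum_prod_mul_det_sq p u hcov]
      refine Finset.sum_le_sum fun I _ => mul_le_mul_of_nonneg_left ?_ (hP0 I)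
      rw [← sq_abs, sq]
      exact mul_le_of_le_one_left (abs_nonneg _)
        (abs_det_le_one_of_norm_eq_one (fun k => u (I k)) fun k => hu _)
    have h2 := Real.pow_div_factorial_le_exp (n : ℝ) (Nat.cast_nonneg n) n
    have hn' : (0 : ℝ) < n := by exact_mod_cast hn
    calc (1 : ℝ) = n ^ n / n.factorial * (n.factorial / n ^ n) := by
          have : (n.factorial : ℝ) ≠ 0 := by positivity
          field_simp
      _ ≤ _ := by gcongr
  obtain ⟨I₀, hI₀⟩ : ∃ I : Fin n → ι, 0 < ∏ k, p (I k) := by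
    by_contra! h
    have := Finset.sum_nonpos fun I (_ : I ∈ Finset.univ) => h I
    linarith
  have hlt : ∑ I : Fin n → ι, (∏ k, p (I k)) *
      (Real.exp n * |(Matrix.of fun k j => u (I k) j).det| * volume.real K) < volume.real K := by
    refine lt_of_lt_of_eq ?_ hleft
    exact Finset.sum_lt_sum (fun I _ => mul_le_mul_of_nonneg_left (hcon I).le (hP0 I))
      ⟨I₀, Finset.mem_univ _, mul_lt_mul_of_pos_left (hcon I₀) hI₀⟩
  have heq : ∑ I : Fin n → ι, (∏ k, p (I k)) *
      (Real.exp n * |(Matrix.of fun k j => u (I k) j).det| * volume.real K) = (Real.exp n *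
      ∑ I : Fin n → ι, (∏ k, p (I k)) * |(Matrix.of fun k j => u (I k) j).det|) *
        volume.real K := by
    rw [Finset.mul_sum, Finset.sum_mul]
    exact Finset.sum_congr rfl fun I _ => by ring
  have := mul_le_mul_of_nonneg_right hdet (measureReal_nonneg (μ := volume) (s := K))
  linarith

/-! ### The maximizer of the product -/

open Metric in
/-- Here `r k` is the value of `s k x = 1 - ⟪v k, x⟫` at a point `z` of `K` where `∏ k, s k` is
maximal. The first-order condition at `z` places `K` in the half-space `∑ k, s k x / r k ≤ n`, which
is the additional facet of the enclosing simplex. The maximum is controlled by the integral through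
the half-size copy of `K` centred at `z`, of volume `2 ^ (-n) * vol K`, on which
`∏ k, s k ≥ 2 ^ (-n) * ∏ k, r k`. -/
theorem exists_product_maximizer {n : ℕ} {K : Set (EuclideanSpace ℝ (Fin n))}
    (hK : IsCompact K) (hc : Convex ℝ K) (h0 : (0 : EuclideanSpace ℝ (Fin n)) ∈ K)
    (v : Fin n → EuclideanSpace ℝ (Fin n)) (hv : ∀ k, ∀ x ∈ K, inner ℝ (v k) x ≤ 1) :
    ∃ r : Fin n → ℝ, (∀ k, 0 < r k) ∧ 1 ≤ ∏ k, r k ∧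
      (∀ x ∈ K, ∑ k, (1 - inner ℝ (v k) x) / r k ≤ n) ∧
      (∏ k, r k) * volume.real K ≤ 4 ^ n * ∫ x in K, ∏ k, (1 - inner ℝ (v k) x) := by
  set s : Fin n → EuclideanSpace ℝ (Fin n) → ℝ := fun k x => 1 - inner ℝ (v k) x with hs
  have hs0 (k) (x) (hx : x ∈ K) : 0 ≤ s k x := sub_nonneg.2 (hv k x hx)
  have hF : Continuous fun x => ∏ k, s k x := by fun_prop
  obtain ⟨z, hz, hmax⟩ := hK.exists_isMaxOn ⟨0, h0⟩ hF.continuousOn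
  have hge : 1 ≤ ∏ k, s k z := by simpa [hs] using hmax h0
  have hpos (k) : 0 < s k z := by
    refine (hs0 k z hz).lt_of_ne' fun h => ?_
    rw [Finset.prod_eq_zero (Finset.mem_univ k) h] at hge
    linarith
  have hline (k) (x) (t : ℝ) : s k (z + t • (x - z)) = s k z + t * (s k x - s k z) := by
    simp only [hs, inner_add_right, real_inner_smul_right, inner_sub_right]; ring
  refine ⟨fun k => s k z, hpos, hge, fun x hx => ?_, ?_⟩
  · -- The derivative at `z` of the product along the segment towards `x` is nonpositive.
    have hseg (t : ℝ) (ht : t ∈ Set.Icc (0 : ℝ) 1) : z + t • (x - z) ∈ K :=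
      hc.add_smul_sub_mem hz hx ht
    set g : ℝ → ℝ := fun t => ∏ k, (s k z + t * (s k x - s k z)) with hg
    have hgmax : IsMaxOn g (Set.Icc 0 1) 0 := by
      intro t ht
      have := hmax (hseg t ht)
      simpa [hg, hline] using this
    have hder : HasDerivAt g (∑ k, (∏ j ∈ Finset.univ.erase k, s j z) * (s k x - s k z)) 0 := by
      have := HasDerivAt.fun_finsetProd (u := Finset.univ) (x := (0 : ℝ))
        (f := fun k t => s k z + t * (s k x - s k z)) (f' := fun k => s k x - s k z)
        fun k _ => by simpa using ((hasDerivAt_id (0 : ℝ)).mul_const (s k x - s k z)).const_add (s k z)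
      simpa using this
    have hle := hgmax.localize.hasFDerivWithinAt_nonpos hder.hasDerivWithinAt.hasFDerivWithinAt
      (y := 1) (by
        have := sub_mem_posTangentConeAt_of_segment_subset (s := Set.Icc (0 : ℝ) 1) (x := 0) (y := 1)
          (by simp [segment_eq_Icc])
        simpa using this)
    simp only [ContinuousLinearMap.toSpanSingleton_apply, one_smul] at hle
    have hfac : ∑ k, (∏ j ∈ Finset.univ.erase k, s j z) * (s k x - s k z) =
        (∏ k, s k z) * (∑ k, s k x / s k z - n) := by
      have : (n : ℝ) = ∑ k : Fin n, 1 := by simp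
      rw [this, ← Finset.sum_sub_distrib, Finset.mul_sum]
      refine Finset.sum_congr rfl fun k _ => ?_
      rw [← Finset.mul_prod_erase _ _ (Finset.mem_univ k)]
      have := (hpos k).ne'
      field_simp
    rw [hfac] at hle
    linarith [nonpos_of_mul_nonpos_right hle (by linarith)]
  · -- On the half-size copy of `K` centred at `z`, every factor is at least half its value at `z`.
    have hsub : AffineMap.homothety z (1 / 2 : ℝ) '' K ⊆ K := by
      rintro _ ⟨x, hx, rfl⟩
      have := hc.add_smul_sub_mem hz hx (t := 1 / 2) (by norm_num)
      simpa [AffineMap.homothety_apply, add_comm] using this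
    have hFint : IntegrableOn (fun x => ∏ k, s k x) K volume :=
      hF.continuousOn.integrableOn_compact hK
    have hcomp : IsCompact (AffineMap.homothety z (1 / 2 : ℝ) '' K) :=
      hK.image (AffineMap.homothety_continuous _ _)
    have hvol : volume.real (AffineMap.homothety z (1 / 2 : ℝ) '' K) =
        (1 / 2) ^ n * volume.real K := by
      rw [Measure.real, Measure.addHaar_image_homothety, ENNReal.toReal_mul,
        ENNReal.toReal_ofReal (abs_nonneg _), finrank_euclideanSpace_fin, abs_of_nonneg (by positivity)]
      rfl
    have h1 : ((1 / 2) ^ n * ∏ k, s k z) * volume.real (AffineMap.homothety z (1 / 2 : ℝ) '' K) ≤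
        ∫ x in AffineMap.homothety z (1 / 2 : ℝ) '' K, ∏ k, s k x := by
      refine setIntegral_ge_of_const_le_real hcomp.measurableSet hcomp.measure_lt_top.ne ?_
        (hFint.mono_set hsub)
      rintro _ ⟨x, hx, rfl⟩
      have : (1 / 2 : ℝ) ^ n * ∏ k, s k z = ∏ k, (1 / 2 * s k z) := by
        simp [Finset.prod_mul_distrib]
      rw [this]
      refine Finset.prod_le_prod (fun k _ => by have := hpos k; positivity) fun k _ => ?_
      have h2 := hline k x (1 / 2)
      have h3 := hs0 k x hx
      rw [AffineMap.homothety_apply, vsub_eq_sub, vadd_eq_add, add_comm, h2]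
      linarith
    have h2 : ∫ x in AffineMap.homothety z (1 / 2 : ℝ) '' K, ∏ k, s k x ≤ ∫ x in K, ∏ k, s k x := by
      refine setIntegral_mono_set hFint ?_ hsub.eventuallyLE
      exact (ae_restrict_mem hK.measurableSet).mono fun x hx =>
        Finset.prod_nonneg fun k _ => hs0 k x hx
    rw [hvol] at h1
    have h4 : (4 : ℝ) ^ n * ((1 / 2) ^ n * (1 / 2) ^ n) = 1 := by
      rw [← mul_pow, ← mul_pow]; norm_num
    calc (∏ k, s k z) * volume.real K
        = 4 ^ n * ((1 / 2) ^ n * (∏ k, s k z) * ((1 / 2) ^ n * volume.real K)) := by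
          linear_combination (-(∏ k, s k z) * volume.real K) * h4
      _ ≤ _ := by gcongr; exact h1.trans h2

/-! ### Simplices and volumes -/

theorem IsSimplex.image {n : ℕ} {T : Set (EuclideanSpace ℝ (Fin n))} (hT : IsSimplex T)
    (A : EuclideanSpace ℝ (Fin n) →L[ℝ] EuclideanSpace ℝ (Fin n)) (hA : A.det ≠ 0)
    (b : EuclideanSpace ℝ (Fin n)) : IsSimplex ((fun x => A x + b) '' T) := by
  obtain ⟨v, hv, rfl⟩ := hT
  set g : EuclideanSpace ℝ (Fin n) →ᵃ[ℝ] EuclideanSpace ℝ (Fin n) :=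
    (A : EuclideanSpace ℝ (Fin n) →ₗ[ℝ] EuclideanSpace ℝ (Fin n)).toAffineMap +
      AffineMap.const ℝ _ b with hg
  have hgc : (g : EuclideanSpace ℝ (Fin n) → _) = fun x => A x + b := by
    ext; simp [hg]
  have hinj : Function.Injective g := by
    rw [hgc]
    intro x y hxy
    exact (LinearMap.equivOfDetNeZero (A : EuclideanSpace ℝ (Fin n) →ₗ[ℝ] _) hA).injective
      (add_right_cancel hxy)
  refine ⟨g ∘ v, hv.map' g hinj, ?_⟩
  rw [← hgc, AffineMap.image_convexHull, Set.range_comp]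

theorem volume_real_image {n : ℕ} (A : EuclideanSpace ℝ (Fin n) →L[ℝ] EuclideanSpace ℝ (Fin n))
    (b : EuclideanSpace ℝ (Fin n)) (s : Set (EuclideanSpace ℝ (Fin n))) :
    volume.real ((fun x => A x + b) '' s) = |A.det| * volume.real s := by
  have : (fun x => A x + b) '' s = (fun x => x + b) '' (A '' s) := by rw [Set.image_image]
  rw [this, Measure.real, Set.image_add_right, measure_preimage_add_right,
    Measure.addHaar_image_continuousLinearMap, ENNReal.toReal_mul,
    ENNReal.toReal_ofReal (abs_nonneg _)]
  rfl

/-- The corner simplex has volume `n ^ n / n!`; the cruder bound `exp n` follows because its indicator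
is dominated by `∏ k, exp (1 - y k)` on the positive orthant. -/
theorem volume_real_corner_le (n : ℕ) :
    volume.real {y : EuclideanSpace ℝ (Fin n) | (∀ k, 0 ≤ y k) ∧ ∑ k, y k ≤ n} ≤ Real.exp n := by
  set s : Set (Fin n → ℝ) := {y | (∀ k, 0 ≤ y k) ∧ ∑ k, y k ≤ n} with hs
  have hsm : MeasurableSet s := by
    have : IsClosed s := by
      simp only [hs, Set.ofPred_and, Set.ofPred_forall]
      exact (isClosed_iInter fun k => isClosed_le continuous_const (by fun_prop)).inter
        (isClosed_le (by fun_prop) continuous_const)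
    exact this.measurableSet
  have hpre : {y : EuclideanSpace ℝ (Fin n) | (∀ k, 0 ≤ y k) ∧ ∑ k, y k ≤ n} =
      WithLp.ofLp ⁻¹' s := rfl
  rw [hpre, Measure.real, (PiLp.volume_preserving_ofLp (Fin n)).measure_preimage
    hsm.nullMeasurableSet, ← Measure.real, ← integral_indicator_one hsm]
  set h : ℝ → ℝ := (Set.Ici (0 : ℝ)).indicator fun t => Real.exp 1 * Real.exp (-t) with hh
  have hint : Integrable h := by
    rw [hh, integrable_indicator_iff measurableSet_Ici, integrableOn_Ici_iff_integrableOn_Ioi]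
    exact (integrableOn_exp_neg_Ioi 0).const_mul _
  have hval : ∫ t, h t = Real.exp 1 := by
    rw [hh, integral_indicator measurableSet_Ici, integral_const_mul,
      integral_Ici_eq_integral_Ioi, integral_exp_neg_Ioi_zero,
      mul_one]
  calc ∫ y, s.indicator 1 y ≤ ∫ y : Fin n → ℝ, ∏ k, h (y k) := by
        refine integral_mono_of_nonneg ?_ (Integrable.fintype_prod fun _ => hint) ?_
        · exact Filter.Eventually.of_forall fun y => Set.indicator_nonneg (by simp) y
        · refine Filter.Eventually.of_forall fun y => ?_
          by_cases hys : y ∈ s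
          · have hk (k : Fin n) : h (y k) = Real.exp (1 - y k) := by
              rw [hh, Set.indicator_of_mem (show y k ∈ Set.Ici (0 : ℝ) from hys.1 k), ← Real.exp_add,
                sub_eq_add_neg]
            simp only [hk]
            simp only [← Real.exp_sum, Set.indicator_of_mem hys, Pi.one_apply]
            rw [Real.one_le_exp_iff]
            simp [hys.2]
          · rw [Set.indicator_of_notMem hys]
            refine Finset.prod_nonneg fun k _ => Set.indicator_nonneg (fun t _ => by positivity) _
    _ = Real.exp n := by
        rw [integral_fintype_prod_volume_eq_pow, hval, ← Real.exp_nat_mul]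
        simp

theorem isSimplex_corner {n : ℕ} (hn : 0 < n) :
    IsSimplex {y : EuclideanSpace ℝ (Fin n) | (∀ k, 0 ≤ y k) ∧ ∑ k, y k ≤ n} := by
  have hn' : (0 : ℝ) < n := by exact_mod_cast hn
  set w : Fin (n + 1) → EuclideanSpace ℝ (Fin n) :=
    Fin.cons 0 fun k => EuclideanSpace.single k (n : ℝ) with hw
  refine ⟨w, ?_, (Set.Subset.antisymm ?_ ?_).symm⟩
  · rw [affineIndependent_iff_of_fintype]
    intro c hc0 hc
    rw [Finset.weightedVSub_eq_linear_combination _ hc0, Fin.sum_univ_succ] at hc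
    rw [Fin.sum_univ_succ] at hc0
    have hsucc (k : Fin n) : c k.succ = 0 := by
      have := congrArg (fun v => v k) hc
      simpa [hw, Pi.single_apply, hn.ne'] using this
    intro i
    refine Fin.cases ?_ hsucc i
    simpa [hsucc] using hc0
  · refine convexHull_min ?_ ?_
    · rintro _ ⟨i, rfl⟩
      refine Fin.cases ?_ (fun k => ?_) i
      · simp [hw]
      · refine ⟨fun j => ?_, ?_⟩
        · by_cases h : j = k <;> simp [hw, h]
        · simp [hw]
    · intro x hx y hy a b ha hb hab
      refine ⟨fun k => ?_, ?_⟩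
      · have := hx.1 k
        have := hy.1 k
        simp only [PiLp.add_apply, PiLp.smul_apply, smul_eq_mul]
        positivity
      · simp only [PiLp.add_apply, PiLp.smul_apply, smul_eq_mul, Finset.sum_add_distrib,
          ← Finset.mul_sum]
        calc a * ∑ k, x k + b * ∑ k, y k ≤ a * n + b * n := by gcongr; exacts [hx.2, hy.2]
          _ = n := by rw [← add_mul, hab, one_mul]
  · intro y hy
    have hsum : y = ∑ i, (Fin.cons (1 - (∑ k, y k) / n) (fun k => y k / n) : Fin (n + 1) → ℝ) i •
        w i := by
      ext j
      simp [Fin.sum_univ_succ, hw, Pi.single_apply, hn'.ne']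
    rw [hsum]
    refine (convex_convexHull ℝ _).sum_mem (fun i _ => ?_) ?_
      fun i _ => subset_convexHull ℝ _ ⟨i, rfl⟩
    · refine Fin.cases ?_ (fun k => ?_) i
      · simpa using div_le_one_of_le₀ hy.2 hn'.le
      · simpa using div_nonneg (hy.1 k) hn'.le
    · simp [Fin.sum_univ_succ, Finset.sum_div]

/-- The simplex cut out by the `n` half-spaces `⟪v k, x⟫ ≤ 1` and the half-space
`∑ k, (1 - ⟪v k, x⟫) / r k ≤ n` is an affine image of the corner simplex. -/
theorem exists_enclosing_simplex {n : ℕ} (hn : 0 < n) {K : Set (EuclideanSpace ℝ (Fin n))}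
    (v : Fin n → EuclideanSpace ℝ (Fin n)) (hdet : (Matrix.of fun k j => v k j).det ≠ 0)
    (hv : ∀ k, ∀ x ∈ K, inner ℝ (v k) x ≤ 1) (r : Fin n → ℝ) (hr : ∀ k, 0 < r k)
    (hK : ∀ x ∈ K, ∑ k, (1 - inner ℝ (v k) x) / r k ≤ n) :
    ∃ T : Set (EuclideanSpace ℝ (Fin n)), IsSimplex T ∧ K ⊆ T ∧
      volume.real T ≤ (∏ k, r k) / |(Matrix.of fun k j => v k j).det| * Real.exp n := by
  obtain ⟨Δ, hΔ, hΔeq⟩ : ∃ Δ : Set (EuclideanSpace ℝ (Fin n)), IsSimplex Δ ∧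
      Δ = {y : EuclideanSpace ℝ (Fin n) | (∀ k, 0 ≤ y k) ∧ ∑ k, y k ≤ (n : ℝ)} := ⟨_, isSimplex_corner hn, rfl⟩
  set V : Matrix (Fin n) (Fin n) ℝ := Matrix.of fun k j => v k j with hV
  set N : Matrix (Fin n) (Fin n) ℝ := Matrix.diagonal (fun k => (r k)⁻¹) * V with hN
  have hNdet : N.det = (∏ k, r k)⁻¹ * V.det := by
    rw [hN, Matrix.det_mul, Matrix.det_diagonal, Finset.prod_inv_distrib]
  have hr0 : 0 < ∏ k, r k := Finset.prod_pos fun k _ => hr k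
  have hN0 : N.det ≠ 0 := by
    rw [hNdet]; exact mul_ne_zero (inv_ne_zero hr0.ne') hdet
  set A := Matrix.toEuclideanCLM (n := Fin n) (𝕜 := ℝ) (-N⁻¹) with hA
  set q : EuclideanSpace ℝ (Fin n) := WithLp.toLp 2 fun k => (r k)⁻¹ with hq
  have hAdet : |A.det| = (∏ k, r k) / |V.det| := by
    rw [hA, det_toEuclideanCLM, Matrix.det_neg, abs_mul, abs_pow, abs_neg, abs_one, one_pow, one_mul,
      Matrix.det_nonsing_inv, Ring.inverse_eq_inv', hNdet, abs_inv, abs_mul, abs_inv,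
      abs_of_pos hr0, mul_inv, inv_inv, div_eq_mul_inv]
  refine ⟨(fun y => A y + (-A q)) '' Δ, hΔ.image A ?_ _, fun x hx => ?_, ?_⟩
  · rw [← abs_pos, hAdet]; exact div_pos hr0 (abs_pos.2 hdet)
  · -- In the coordinates `y k = (1 - ⟪v k, x⟫) / r k = q k - (N x) k` the simplex is the corner.
    refine ⟨WithLp.toLp 2 fun k => (1 - inner ℝ (v k) x) / r k, ?_, ?_⟩
    · rw [hΔeq]
      exact ⟨fun k => div_nonneg (sub_nonneg.2 (hv k x hx)) (hr k).le, hK x hx⟩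
    · have h1 : (WithLp.toLp 2 fun k => (1 - inner ℝ (v k) x) / r k : EuclideanSpace ℝ (Fin n)) =
          q - Matrix.toEuclideanCLM (n := Fin n) (𝕜 := ℝ) N x := by
        ext k
        simp only [hq, hN, hV, Matrix.ofLp_toEuclideanCLM, Matrix.mulVec, dotProduct,
          PiLp.inner_apply, PiLp.sub_apply, Matrix.diagonal_mul, Matrix.of_apply, RCLike.inner_apply,
          conj_trivial, mul_assoc, ← Finset.mul_sum]
        simp only [mul_comm (x _)]
        ring
      have h2 : A (Matrix.toEuclideanCLM (n := Fin n) (𝕜 := ℝ) N x) = -x := by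
        rw [hA, ← mul_apply_eq_comp, ← map_mul, neg_mul,
          Matrix.nonsing_inv_mul _ (isUnit_iff_ne_zero.2 hN0)]
        simp
      simp only [h1, map_sub, h2]
      abel
  · rw [volume_real_image, hAdet, hΔeq]
    exact mul_le_mul_of_nonneg_left (volume_real_corner_le n) (by positivity)

open Metric in
/-- The unit ball contains the cube `[-1/√n, 1/√n]ⁿ`. -/
theorem le_volume_real_of_closedBall_subset {n : ℕ} (hn : 0 < n)
    {K : Set (EuclideanSpace ℝ (Fin n))} (hK : IsCompact K) (hB : closedBall 0 1 ⊆ K) :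
    (2 / √n) ^ n ≤ volume.real K := by
  have hn' : (0 : ℝ) < n := by exact_mod_cast hn
  have hs : 0 < √(n : ℝ) := Real.sqrt_pos.2 hn'
  set c : Set (Fin n → ℝ) := Set.Icc (fun _ => -(1 / √n)) (fun _ => 1 / √n) with hc
  have hsub : WithLp.ofLp ⁻¹' c ⊆ K := by
    refine Set.Subset.trans (fun y hy => ?_) hB
    have hy' (k : Fin n) : y k ^ 2 ≤ 1 / n := by
      have h := sq_le_sq' (hy.1 k) (hy.2 k)
      rwa [div_pow, one_pow, Real.sq_sqrt hn'.le] at h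
    rw [mem_closedBall_zero_iff, EuclideanSpace.norm_eq, Real.sqrt_le_one]
    calc ∑ k, ‖y k‖ ^ 2 ≤ ∑ k : Fin n, 1 / (n : ℝ) :=
          Finset.sum_le_sum fun k _ => by simpa using hy' k
      _ = 1 := by simp [hn'.ne']
  have hvol : volume.real (WithLp.ofLp ⁻¹' c : Set (EuclideanSpace ℝ (Fin n))) = (2 / √n) ^ n := by
    rw [Measure.real, (PiLp.volume_preserving_ofLp (Fin n)).measure_preimage
      measurableSet_Icc.nullMeasurableSet, Real.volume_Icc_pi_toReal]
    · simp only [sub_neg_eq_add, Finset.prod_const, Finset.card_univ, Fintype.card_fin]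
      congr 1; ring
    · intro k; have : 0 < 1 / √(n : ℝ) := by positivity
      linarith
  rw [← hvol]
  exact measureReal_mono hsub hK.measure_lt_top.ne

/-! ### The enclosing simplex -/

open Metric in
/-- The estimate in John's position, with a bound on the volume of the simplex that does not refer
to the volume of `K`: the factor `|det|` of the chosen contact points cancels. -/
theorem exists_simplex_of_maximal {n : ℕ} (hn : 0 < n) {K : Set (EuclideanSpace ℝ (Fin n))}
    (hK : IsCompact K) (hc : Convex ℝ K) (hB : closedBall 0 1 ⊆ K)
    (hmax : ∀ (A : EuclideanSpace ℝ (Fin n) →L[ℝ] EuclideanSpace ℝ (Fin n)) b,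
      (∀ y ∈ closedBall (0 : EuclideanSpace ℝ (Fin n)) 1, A y + b ∈ K) → |A.det| ≤ 1) :
    ∃ T : Set (EuclideanSpace ℝ (Fin n)), IsSimplex T ∧ K ⊆ T ∧
      volume.real T ≤ (4 * Real.exp 2) ^ n := by
  have hn' : (0 : ℝ) < n := by exact_mod_cast hn
  have hvol : 0 < volume.real K :=
    lt_of_lt_of_le (by positivity) (le_volume_real_of_closedBall_subset hn hK hB)
  obtain ⟨ι, _, p, u, hp, hp1, hu, huK, hmean, hcov⟩ := exists_john_decomposition hn hK hc hB hmax
  obtain ⟨I, hI⟩ := exists_selection hn hK hp hp1 hu hmean hcov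
  obtain ⟨r, hr, hr1, hrK, hrvol⟩ := exists_product_maximizer hK hc (hB (by simp))
    (fun k => u (I k)) fun k => huK _
  have hprod : ∏ k, r k ≤ 4 ^ n * (Real.exp n * |(Matrix.of fun k j => u (I k) j).det|) := by
    refine le_of_mul_le_mul_right (hrvol.trans ?_) hvol
    rw [mul_assoc]
    gcongr
  have hdet : 0 < |(Matrix.of fun k j => u (I k) j).det| := by
    by_contra! h
    rw [abs_nonpos_iff.1 h] at hprod
    simp at hprod
    linarith
  obtain ⟨T, hT, hKT, hTvol⟩ := exists_enclosing_simplex hn (fun k => u (I k)) (abs_pos.1 hdet)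
    (fun k => huK _) r hr hrK
  refine ⟨T, hT, hKT, hTvol.trans ?_⟩
  calc _ ≤ 4 ^ n * Real.exp n * Real.exp n := by
        gcongr
        rw [div_le_iff₀ hdet]
        linarith
    _ = (4 * Real.exp 2) ^ n := by
        rw [mul_assoc, ← Real.exp_add, mul_pow, ← Real.exp_nat_mul]
        ring_nf

open Metric in
/-- A maximal ellipsoid in `K`, parametrized as the image of the unit ball under `y ↦ A y + b`; no
symmetry or positivity of `A` is required, only that `|det A|` be maximal. -/
theorem exists_maximal_ellipsoid {n : ℕ} {K : Set (EuclideanSpace ℝ (Fin n))}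
    (hK : IsCompact K) (hint : (interior K).Nonempty) :
    ∃ (A : EuclideanSpace ℝ (Fin n) →L[ℝ] EuclideanSpace ℝ (Fin n)) (b : EuclideanSpace ℝ (Fin n)),
      A.det ≠ 0 ∧ (∀ y ∈ closedBall (0 : EuclideanSpace ℝ (Fin n)) 1, A y + b ∈ K) ∧
      ∀ (C : EuclideanSpace ℝ (Fin n) →L[ℝ] EuclideanSpace ℝ (Fin n)) d,
        (∀ y ∈ closedBall (0 : EuclideanSpace ℝ (Fin n)) 1, C y + d ∈ K) → |C.det| ≤ |A.det| := by
  set P : Set ((EuclideanSpace ℝ (Fin n) →L[ℝ] EuclideanSpace ℝ (Fin n)) ×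
    EuclideanSpace ℝ (Fin n)) :=
    {q | ∀ y ∈ closedBall (0 : EuclideanSpace ℝ (Fin n)) 1, q.1 y + q.2 ∈ K} with hP
  have hPcl : IsClosed P := by
    simp only [hP, Set.ofPred_forall]
    refine isClosed_iInter fun y => isClosed_iInter fun _ => hK.isClosed.preimage ?_
    exact (continuous_fst.clm_apply continuous_const).add continuous_snd
  obtain ⟨R, hR⟩ := hK.isBounded.exists_norm_le
  have hPb : P ⊆ closedBall 0 (2 * R) := by
    rintro ⟨A, b⟩ hq
    have hb : ‖b‖ ≤ R := by simpa using hR _ (hq 0 (by simp))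
    have hR0 : 0 ≤ R := (norm_nonneg b).trans hb
    have hA : ‖A‖ ≤ 2 * R := by
      refine A.opNorm_le_of_unit_norm (by positivity) fun y hy => ?_
      have := hR _ (hq y (by simp [hy]))
      calc ‖A y‖ = ‖(A y + b) - b‖ := by simp
        _ ≤ ‖A y + b‖ + ‖b‖ := norm_sub_le _ _
        _ ≤ 2 * R := by linarith
    rw [mem_closedBall_zero_iff, Prod.norm_mk]
    exact max_le hA (by linarith)
  have : ProperSpace ((EuclideanSpace ℝ (Fin n) →L[ℝ] EuclideanSpace ℝ (Fin n)) ×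
    EuclideanSpace ℝ (Fin n)) := FiniteDimensional.proper ℝ _
  have hPc : IsCompact P := (isCompact_closedBall _ _).of_isClosed_subset hPcl hPb
  obtain ⟨c, hcint⟩ := hint
  obtain ⟨ρ, hρ, hball⟩ := nhds_basis_closedBall.mem_iff.1 (mem_interior_iff_mem_nhds.1 hcint)
  have hmem : (ρ • ContinuousLinearMap.id ℝ (EuclideanSpace ℝ (Fin n)), c) ∈ P := by
    intro y hy
    apply hball
    have hy1 : ‖y‖ ≤ 1 := by simpa using hy
    simp only [mem_closedBall, dist_eq_norm, smul_apply, ContinuousLinearMap.id_apply,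
      add_sub_cancel_right, norm_smul, Real.norm_of_nonneg hρ.le]
    nlinarith
  have hcont : Continuous fun q : (EuclideanSpace ℝ (Fin n) →L[ℝ] EuclideanSpace ℝ (Fin n)) ×
      EuclideanSpace ℝ (Fin n) => |q.1.det| :=
    (ContinuousLinearMap.continuous_det.comp continuous_fst).abs
  obtain ⟨⟨A, b⟩, hAb, hmax⟩ := hPc.exists_isMaxOn ⟨_, hmem⟩ hcont.continuousOn
  refine ⟨A, b, ?_, hAb, fun C d hC => hmax (show (C, d) ∈ P from hC)⟩
  have h1 := hmax hmem
  have h2 : (ρ • ContinuousLinearMap.id ℝ (EuclideanSpace ℝ (Fin n))).det = ρ ^ n := by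
    simp [ContinuousLinearMap.det]
  simp only [Set.mem_ofPred_eq, h2] at h1
  exact abs_pos.1 (lt_of_lt_of_le (by positivity) h1)

open Metric in
/-- The general case: `K` is carried to John's position by an affine map, which scales `vol T` and
`vol K` by the same factor. -/
theorem exists_simplex_volume_le {n : ℕ} (hn : 0 < n) {K : Set (EuclideanSpace ℝ (Fin n))}
    (hK : IsCompact K) (hc : Convex ℝ K) (hint : (interior K).Nonempty) :
    ∃ T : Set (EuclideanSpace ℝ (Fin n)), IsSimplex T ∧ K ⊆ T ∧
      volume.real T ≤ (2 * Real.exp 2 * √n) ^ n * volume.real K := by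
  obtain ⟨A, b, hA, hAK, hAmax⟩ := exists_maximal_ellipsoid hK hint
  set e := A.toContinuousLinearEquivOfDetNeZero hA with he
  have heA (x) : e x = A x := rfl
  set K' : Set (EuclideanSpace ℝ (Fin n)) := (fun x => e.symm (x - b)) '' K with hK'
  have hmem (x) : x ∈ K' ↔ A x + b ∈ K := by
    constructor
    · rintro ⟨y, hy, rfl⟩
      simpa [← heA] using hy
    · intro h
      exact ⟨_, h, by simp [← heA]⟩
  have hKimg : K = (fun x => A x + b) '' K' := by
    rw [hK', Set.image_image]
    simp [← heA]
  have hK'c : IsCompact K' := hK.image (by fun_prop)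
  have hK'conv : Convex ℝ K' := by
    intro x hx y hy s t hs ht hst
    rw [hmem] at *
    convert hc hx hy hs ht hst using 1
    rw [map_add, map_smul, map_smul, smul_add, smul_add]
    have : b = s • b + t • b := by rw [← add_smul, hst, one_smul]
    nth_rw 1 [this]
    abel
  have hK'B : closedBall 0 1 ⊆ K' := fun y hy => (hmem y).2 (hAK y hy)
  obtain ⟨T, hT, hKT, hTvol⟩ := exists_simplex_of_maximal hn hK'c hK'conv hK'B fun C d hC => by
    have h := hAmax (A * C) (A d + b) fun y hy => by
      have := (hmem _).1 (hC y hy)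
      simpa [add_assoc] using this
    have hmul : (A * C).det = A.det * C.det := by
      simp [ContinuousLinearMap.det]
    rw [hmul, abs_mul] at h
    exact le_of_mul_le_mul_left (by simpa using h) (abs_pos.2 hA)
  refine ⟨(fun x => A x + b) '' T, hT.image A hA b, ?_, ?_⟩
  · rw [hKimg]; exact Set.image_mono hKT
  · have hn' : (0 : ℝ) < √n := Real.sqrt_pos.2 (by exact_mod_cast hn)
    have hvol := le_volume_real_of_closedBall_subset hn hK'c hK'B
    have hKvol : volume.real K = |A.det| * volume.real K' := by
      conv_lhs => rw [hKimg]
      exact volume_real_image A b K'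
    rw [volume_real_image, hKvol]
    calc |A.det| * volume.real T
        ≤ |A.det| * (4 * Real.exp 2) ^ n := by gcongr
      _ = (2 * Real.exp 2 * √n) ^ n * (|A.det| * (2 / √n) ^ n) := by
          rw [mul_left_comm, ← mul_pow]
          congr 2
          field_simp
          norm_num
      _ ≤ _ := by gcongr

/-- The simplex of minimal volume containing a convex body `K ⊂ ℝⁿ` satisfies
`(vol(S_min)/vol(K))^{1/n} ≤ d√n` for an absolute constant `d > 0`. -/
theorem minimal_enclosing_simplex_bound :
    ∃ d : ℝ, 0 < d ∧ ∀ (n : ℕ), 0 < n → ∀ K : Set (EuclideanSpace ℝ (Fin n)),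
      IsCompact K → Convex ℝ K → (interior K).Nonempty →
      ∀ S : Set (EuclideanSpace ℝ (Fin n)), IsSimplex S → K ⊆ S →
        (∀ T : Set (EuclideanSpace ℝ (Fin n)), IsSimplex T → K ⊆ T →
          volume S ≤ volume T) →
        ((volume S).toReal / (volume K).toReal) ^ ((1 : ℝ) / n) ≤ d * Real.sqrt n := by
  refine ⟨2 * Real.exp 2, by positivity, fun n hn K hK hc hint S _ _ hmin => ?_⟩
  obtain ⟨T, hT, hKT, hTvol⟩ := exists_simplex_volume_le hn hK hc hint
  have hTfin : volume T ≠ ⊤ := by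
    obtain ⟨v, -, rfl⟩ := hT
    exact ((Set.finite_range v).isCompact_convexHull ℝ).measure_lt_top.ne
  have hST : (volume S).toReal ≤ volume.real T := ENNReal.toReal_mono hTfin (hmin T hT hKT)
  have hK0 : 0 < (volume K).toReal :=
    ENNReal.toReal_pos (Measure.measure_pos_of_nonempty_interior volume hint).ne' hK.measure_lt_top.ne
  have hratio : (volume S).toReal / (volume K).toReal ≤ (2 * Real.exp 2 * √n) ^ n := by
    rw [div_le_iff₀ hK0]
    exact hST.trans hTvol
  calc _ ≤ ((2 * Real.exp 2 * √n) ^ n) ^ ((1 : ℝ) / n) := by gcongr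
    _ = 2 * Real.exp 2 * √n := by
      rw [one_div, Real.pow_rpow_inv_natCast (by positivity) hn.ne']
end
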